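/- arXiv:math/0610345 — 5 statements merged into one kernel-verified Lean document; each statement's English description precedes it below -/
import Mathlib

section
/- Let P be a Markov chain on a finite state space X with uniform stationary distribution and maximal hitting time H. Then for any subset Y ⊆ X and any starting state, with probability at least 1/2 the chain visits at least |Y|/2 distinct elements of Y by time 4H. -/
open Finset
open scoped Classical

namespace Paper

variable {X : Type} [Fintype X] [DecidableEq X]

/-- `P` is a stochastic matrix. -/
def IsStoch (P : Matrix X X ℝ) : Prop :=
  (∀ x y, 0 ≤ P x y) ∧ ∀ x, ∑ y, P x y = 1

/-- The uniform distribution is stationary for `P` (all columns sum to 1). -/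
def UnifStationary (P : Matrix X X ℝ) : Prop := ∀ y, ∑ x, P x y = 1

/-- Irreducibility of the chain. -/
def Irred (P : Matrix X X ℝ) : Prop := ∀ x y, ∃ n, 0 < (P ^ n) x y

/-- Probability of a trajectory `ω 0, ω 1, …, ω n` under initial distribution `μ`. -/
noncomputable def pathProb (P : Matrix X X ℝ) (μ : X → ℝ) {n : ℕ}
    (ω : Fin (n + 1) → X) : ℝ :=
  μ (ω 0) * ∏ i : Fin n, P (ω i.castSucc) (ω i.succ)

/-- Probability of an event determined by the trajectory up to time `n`. -/
noncomputable def prPath (P : Matrix X X ℝ) (μ : X → ℝ) (n : ℕ)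
    (E : (Fin (n + 1) → X) → Prop) : ℝ :=
  ∑ ω : Fin (n + 1) → X, if E ω then pathProb P μ ω else 0

/-- Expectation of a functional of the trajectory up to time `n`. -/
noncomputable def expPath (P : Matrix X X ℝ) (μ : X → ℝ) (n : ℕ)
    (f : (Fin (n + 1) → X) → ℝ) : ℝ :=
  ∑ ω : Fin (n + 1) → X, pathProb P μ ω * f ω

/-- Point mass at `x`. -/
def delta (x : X) : X → ℝ := fun z => if z = x then 1 else 0

/-- Expected hitting time `E_x[T_y]`, via `E[T] = ∑_{n ≥ 0} Pr(T > n)`. -/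
noncomputable def hitExp (P : Matrix X X ℝ) (x y : X) : ℝ :=
  (∑' n : ℕ, ENNReal.ofReal (prPath P (delta x) n (fun ω => ∀ i, ω i ≠ y))).toReal

/-- Maximal expected hitting time `H = max_{x,y} E_x[T_y]`. -/
noncomputable def maxHit (P : Matrix X X ℝ) : ℝ := ⨆ x, ⨆ y, hitExp P x y

/-- Relaxation time: `max 1/(1-|λ|)` over nontrivial eigenvalues `λ` of `P`. -/
noncomputable def Trel (P : Matrix X X ℝ) : ℝ :=
  sSup ((fun l : ℝ => 1 / (1 - |l|)) '' (spectrum ℝ P \ {1}))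

/-- The set of states not visited by the trajectory `ω` (up to its time horizon). -/
noncomputable def unvisited {n : ℕ} (ω : Fin (n + 1) → X) : Finset X :=
  Finset.univ.filter fun x => ∀ i, ω i ≠ x

/-- `Pr_x(T⁺_x ≥ s)`: the chain started at `x` does not return to `x`
at any time `i` with `1 ≤ i < s`. -/
noncomputable def prReturnGE (P : Matrix X X ℝ) (x : X) (s : ℝ) : ℝ :=
  prPath P (delta x) ⌈s⌉₊
    (fun ω => ∀ i : Fin (⌈s⌉₊ + 1), 1 ≤ (i : ℕ) → ((i : ℕ) : ℝ) < s → ω i ≠ x)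

/-- Separation distance at time `n` from state `x`. -/
noncomputable def sep (P : Matrix X X ℝ) (pi : X → ℝ) (x : X) (n : ℕ) : ℝ :=
  ⨆ y, (1 - (P ^ n) x y / pi y)

/-- Relative entropy `D(μ ‖ pi)` (with `0 log 0 = 0`). -/
noncomputable def relEnt (μ pi : X → ℝ) : ℝ := ∑ x, μ x * Real.log (μ x / pi x)

/-- Total variation distance `d_tv(μ, pi) = ∑_{y : μ y < pi y} (pi y - μ y)`. -/
noncomputable def dtv (μ pi : X → ℝ) : ℝ :=
  ∑ y ∈ Finset.univ.filter (fun y => μ y < pi y), (pi y - μ y)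

/-- Entropy decay (mixing) time. -/
noncomputable def tauEnt (P : Matrix X X ℝ) (pi : X → ℝ) (ε : ℝ) : ℕ :=
  sInf {n' | ∀ n ≥ n', ∀ x, relEnt ((P ^ n) x) pi ≤ ε}

/-- Separation mixing time. -/
noncomputable def tauSep (P : Matrix X X ℝ) (pi : X → ℝ) (ε : ℝ) : ℕ :=
  sInf {n' | ∀ n ≥ n', ∀ x, sep P pi x n ≤ ε}

/-- Total variation mixing time. -/
noncomputable def tauTV (P : Matrix X X ℝ) (pi : X → ℝ) (ε : ℝ) : ℕ :=
  sInf {n' | ∀ n ≥ n', ∀ x, dtv ((P ^ n) x) pi ≤ ε}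

/-- `L²(pi)` distance of `Pᵗ(x,·)` from `pi`. -/
noncomputable def chiDist (P : Matrix X X ℝ) (pi : X → ℝ) (t : ℕ) (x : X) : ℝ :=
  Real.sqrt (∑ y, ((P ^ t) x y / pi y - 1) ^ 2 * pi y)

/-- `L²` mixing time. -/
noncomputable def tau2 (P : Matrix X X ℝ) (pi : X → ℝ) : ℕ :=
  sInf {t | ∀ x, chiDist P pi t x ≤ 1 / 4}

/-- Uniform distribution on a finite type. -/
noncomputable def unif (Y : Type) [Fintype Y] : Y → ℝ := fun _ => (Fintype.card Y : ℝ)⁻¹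

/-- The `m`-state lamplighter chain over a base chain `Pb`:
the lamp at the current position is randomized, the lamplighter moves one step
of the base chain, and the lamp at the new position is randomized. -/
noncomputable def lampChain {V : Type} [Fintype V] [DecidableEq V]
    (Pb : Matrix V V ℝ) (m : ℕ) :
    Matrix ((V → Fin m) × V) ((V → Fin m) × V) ℝ :=
  fun p q =>
    if ∀ z, z ≠ p.2 → z ≠ q.2 → q.1 z = p.1 z then
      Pb p.2 q.2 * ((m : ℝ)⁻¹) ^ (({p.2, q.2} : Finset V).card)
    else 0

/-- Simple random walk on a `d`-regular graph. -/
noncomputable def srw {V : Type} [Fintype V] [DecidableEq V]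
    (G : SimpleGraph V) (d : ℕ) : Matrix V V ℝ :=
  fun x y => if G.Adj x y then (d : ℝ)⁻¹ else 0


lemma prPath_succ (P : Matrix X X ℝ) (x : X) (n : ℕ) (E : (Fin (n + 2) → X) → Prop) :
    prPath P (delta x) (n + 1) E =
      ∑ z, P x z * prPath P (delta z) n (fun ω => E (Fin.cons x ω)) := by
  have h1 : prPath P (delta x) (n + 1) E = ∑ ω : Fin (n + 1) → X,
      if E (Fin.cons x ω) then P x (ω 0) * ∏ i : Fin n, P (ω i.castSucc) (ω i.succ) else 0 := by
    unfold prPath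
    rw [← (Fin.consEquiv (fun _ : Fin (n + 2) => X)).sum_comp, Fintype.sum_prod_type]
    rw [Finset.sum_eq_single x]
    · apply Finset.sum_congr rfl
      intro ω _
      simp [Fin.consEquiv, pathProb, delta, Fin.prod_univ_succ, ← Fin.succ_castSucc]
    · intro z _ hz
      apply Finset.sum_eq_zero
      intro ω _
      simp [Fin.consEquiv, pathProb, delta, hz]
    · simp
  rw [h1]
  unfold prPath
  simp_rw [Finset.mul_sum]
  rw [Finset.sum_comm]
  apply Finset.sum_congr rfl
  intro ω _
  by_cases hE : E (Fin.cons x ω)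
  · simp [hE, pathProb, delta]
  · simp [hE]

lemma prPath_zero (P : Matrix X X ℝ) (x : X) (E : (Fin 1 → X) → Prop) :
    prPath P (delta x) 0 E = if E (fun _ => x) then 1 else 0 := by
  unfold prPath
  rw [← (Equiv.funUnique (Fin 1) X).symm.sum_comp, Finset.sum_eq_single x]
  · have : (Equiv.funUnique (Fin 1) X).symm x = fun _ => x := by ext i; simp
    simp [this, pathProb, delta]
  · intro z _ hz
    simp [pathProb, delta, hz]
  · simp

lemma prPath_true (P : Matrix X X ℝ) (hP : IsStoch P) (n : ℕ) (x : X) :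
    prPath P (delta x) n (fun _ => True) = 1 := by
  induction n generalizing x with
  | zero => simp [prPath_zero]
  | succ n ih => rw [prPath_succ]; simp [ih, hP.2]

lemma pathProb_nonneg (P : Matrix X X ℝ) (hP : IsStoch P) (x : X) {n : ℕ}
    (ω : Fin (n + 1) → X) : 0 ≤ pathProb P (delta x) ω := by
  unfold pathProb delta
  apply mul_nonneg
  · split_ifs <;> norm_num
  · exact Finset.prod_nonneg fun i _ => hP.1 _ _

/-- probability of avoiding `y` up to time `n`. -/
noncomputable def av (P : Matrix X X ℝ) (y : X) (n : ℕ) (x : X) : ℝ :=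
  prPath P (delta x) n (fun ω => ∀ i, ω i ≠ y)

lemma av_zero (P : Matrix X X ℝ) (y x : X) : av P y 0 x = if x = y then 0 else 1 := by
  unfold av
  rw [prPath_zero]
  by_cases h : x = y <;> simp [h]

lemma av_succ (P : Matrix X X ℝ) (y x : X) (n : ℕ) :
    av P y (n + 1) x = if x = y then 0 else ∑ z, P x z * av P y n z := by
  unfold av
  rw [prPath_succ]
  by_cases h : x = y
  · simp [h, Fin.forall_fin_succ, prPath]
  · simp [h, Fin.forall_fin_succ (n := n + 1)]

lemma av_nonneg (P : Matrix X X ℝ) (hP : IsStoch P) (y : X) (n : ℕ) (x : X) :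
    0 ≤ av P y n x := by
  unfold av prPath
  apply Finset.sum_nonneg
  intro ω _
  split_ifs
  · exact pathProb_nonneg P hP x ω
  · exact le_rfl

lemma av_le (P : Matrix X X ℝ) (hP : IsStoch P) (y : X) (n : ℕ) (x : X) :
    av P y n x ≤ 1 - (P ^ n) x y := by
  induction n generalizing x with
  | zero =>
    rw [av_zero]
    by_cases h : x = y <;> simp [h]
  | succ n ih =>
    have h1 : ∑ z, P x z * av P y n z ≤ 1 - (P ^ (n + 1)) x y := by
      calc _ ≤ ∑ z, P x z * (1 - (P ^ n) z y) :=
            Finset.sum_le_sum fun z _ => mul_le_mul_of_nonneg_left (ih z) (hP.1 _ _)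
        _ = _ := by
            simp only [mul_sub, mul_one, Finset.sum_sub_distrib, hP.2, pow_succ', Matrix.mul_apply]
    rw [av_succ]
    split_ifs
    · refine le_trans (Finset.sum_nonneg fun z _ => ?_) h1
      exact mul_nonneg (hP.1 _ _) (av_nonneg P hP _ _ _)
    · exact h1

lemma av_anti_succ (P : Matrix X X ℝ) (hP : IsStoch P) (y : X) (n : ℕ) (x : X) :
    av P y (n + 1) x ≤ av P y n x := by
  induction n generalizing x with
  | zero =>
    rw [av_succ, av_zero]
    split_ifs
    · exact le_rfl
    · rw [← hP.2 x]
      refine Finset.sum_le_sum fun z _ => mul_le_of_le_one_right (hP.1 _ _) ?_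
      rw [av_zero]; split_ifs <;> norm_num
  | succ n ih =>
    rw [av_succ, av_succ P y x n]
    split_ifs
    · exact le_rfl
    · exact Finset.sum_le_sum fun z _ => mul_le_mul_of_nonneg_left (ih z) (hP.1 _ _)

lemma av_antitone (P : Matrix X X ℝ) (hP : IsStoch P) (y : X) (x : X) :
    Antitone (fun n => av P y n x) :=
  antitone_nat_of_succ_le fun n => av_anti_succ P hP y n x

lemma av_le_one (P : Matrix X X ℝ) (hP : IsStoch P) (y : X) (n : ℕ) (x : X) :
    av P y n x ≤ 1 := by
  refine (av_antitone P hP y x (Nat.zero_le n)).trans ?_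
  simp only [av_zero]; split_ifs <;> norm_num

lemma av_summable (P : Matrix X X ℝ) (hP : IsStoch P) (hirr : Irred P) (y x : X) :
    Summable (fun n => av P y n x) := by
  choose f hf using fun z => hirr z y
  let N := Finset.univ.sup f
  have hN : ∀ z, av P y N z < 1 := fun z => by
    have h1 : av P y N z ≤ av P y (f z) z :=
      av_antitone P hP y z (Finset.le_sup (Finset.mem_univ z))
    have := av_le P hP y (f z) z
    have := hf z
    linarith
  obtain ⟨z0, -, hz0⟩ := Finset.exists_max_image Finset.univ (fun z => av P y N z) ⟨x, by simp⟩
  set c := av P y N z0 with hc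
  have hc1 : c < 1 := hN z0
  have hdec : ∀ m z, av P y (m + N) z ≤ c * av P y m z := by
    intro m
    induction m with
    | zero =>
      intro z
      rw [Nat.zero_add, av_zero]
      split_ifs with h
      · rw [mul_zero]
        cases hNN : N with
        | zero => simp [av_zero, h]
        | succ k => simp [av_succ, h]
      · rw [mul_one]; exact hz0 z (Finset.mem_univ z)
    | succ m ih =>
      intro z
      rw [show m + 1 + N = (m + N) + 1 by omega, av_succ, av_succ]
      split_ifs
      · simp
      · rw [Finset.mul_sum]
        refine Finset.sum_le_sum fun w _ => ?_
        have := mul_le_mul_of_nonneg_left (ih w) (hP.1 z w)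
        linarith
  refine summable_of_sum_range_le (c := N / (1 - c)) (fun n => av_nonneg P hP y n x) fun M => ?_
  rw [le_div_iff₀ (by linarith)]
  have h1 : ∑ i ∈ range M, av P y i x ≤ ∑ i ∈ range (N + M), av P y i x :=
    Finset.sum_le_sum_of_subset_of_nonneg (Finset.range_mono (by omega))
      fun i _ _ => av_nonneg P hP y i x
  rw [Finset.sum_range_add] at h1
  have h2 : ∑ i ∈ range N, av P y i x ≤ N := by
    calc _ ≤ ∑ i ∈ range N, (1 : ℝ) := Finset.sum_le_sum fun i _ => av_le_one P hP y i x
      _ = N := by simp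
  have h3 : ∑ i ∈ range M, av P y (N + i) x ≤ c * ∑ i ∈ range M, av P y i x := by
    rw [Finset.mul_sum]
    refine Finset.sum_le_sum fun i _ => ?_
    rw [add_comm]; exact hdec i x
  linarith

lemma hitExp_eq (P : Matrix X X ℝ) (hP : IsStoch P) (hirr : Irred P) (x y : X) :
    hitExp P x y = ∑' n, av P y n x := by
  unfold hitExp
  change (∑' n : ℕ, ENNReal.ofReal (av P y n x)).toReal = _
  rw [← ENNReal.ofReal_tsum_of_nonneg (fun n => av_nonneg P hP y n x) (av_summable P hP hirr y x),
    ENNReal.toReal_ofReal (tsum_nonneg fun n => av_nonneg P hP y n x)]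

lemma hitExp_le (P : Matrix X X ℝ) (x y : X) : hitExp P x y ≤ maxHit P := by
  unfold maxHit
  exact (le_ciSup (f := fun y => hitExp P x y) (Set.finite_range _).bddAbove y).trans
    (le_ciSup (f := fun x => ⨆ y, hitExp P x y) (Set.finite_range _).bddAbove x)

lemma av_quarter (P : Matrix X X ℝ) (hP : IsStoch P) (hirr : Irred P) (x y : X) :
    av P y ⌈4 * maxHit P⌉₊ x ≤ 1 / 4 := by
  set n := ⌈4 * maxHit P⌉₊ with hn
  have h1 : 4 * maxHit P ≤ n := Nat.le_ceil _
  have h2 : ∑ i ∈ range (n + 1), av P y i x ≤ maxHit P := by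
    refine ((av_summable P hP hirr y x).sum_le_tsum _ fun i _ => av_nonneg P hP y i x).trans ?_
    rw [← hitExp_eq P hP hirr]
    exact hitExp_le P x y
  have h3 : ((n : ℝ) + 1) * av P y n x ≤ ∑ i ∈ range (n + 1), av P y i x := by
    have := Finset.card_nsmul_le_sum (range (n + 1)) (fun i => av P y i x) (av P y n x)
      fun i hi => av_antitone P hP y x (by simp at hi; omega)
    simpa using this
  have hn0 : (0 : ℝ) ≤ n := Nat.cast_nonneg n
  by_contra! h
  nlinarith

/-- For a chain with uniform stationary distribution and maximal
hitting time `H`, from any starting state, with probability at least `1/2` the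
chain visits at least `|Y|/2` distinct elements of `Y` by time `4H`. -/
theorem visit_half_by_four_hitting
    (X : Type) [Fintype X] [DecidableEq X] [Nonempty X]
    (P : Matrix X X ℝ)
    (hP : IsStoch P) (hu : UnifStationary P) (hirr : Irred P)
    (Y : Finset X) (x : X) :
    1 / 2 ≤
      prPath P (delta x) ⌈4 * maxHit P⌉₊
        (fun ω => (Y.card : ℝ) / 2 ≤ ((Y.filter fun y => ∃ i, ω i = y).card : ℝ)) := by
  set n := ⌈4 * maxHit P⌉₊ with hn
  set p : (Fin (n + 1) → X) → ℝ := fun ω => pathProb P (delta x) ω with hp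
  set V : (Fin (n + 1) → X) → Finset X := fun ω => Y.filter fun y => ∃ i, ω i = y with hV
  have hp0 : ∀ ω, 0 ≤ p ω := fun ω => pathProb_nonneg P hP x ω
  have hp1 : ∑ ω, p ω = 1 := by
    have := prPath_true P hP n x
    simpa [prPath] using this
  have hcard : ∀ ω, ((V ω).card : ℝ) = Y.card - ∑ y ∈ Y, if ∀ i, ω i ≠ y then (1 : ℝ) else 0 := by
    intro ω
    have h := Finset.card_filter_add_card_filter_not (s := Y) (fun y => ∃ i, ω i = y)
    have h' : ∑ y ∈ Y, (if ∀ i, ω i ≠ y then (1 : ℝ) else 0)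
        = ((Y.filter fun y => ¬ ∃ i, ω i = y).card : ℝ) := by
      simp
    rw [h', ← h]
    push_cast
    simp [hV]
  have hexp : ∑ ω, p ω * ∑ y ∈ Y, (if ∀ i, ω i ≠ y then (1 : ℝ) else 0) ≤ Y.card * (1 / 4) := by
    calc _ = ∑ y ∈ Y, av P y n x := by
          simp_rw [Finset.mul_sum]
          rw [Finset.sum_comm]
          refine Finset.sum_congr rfl fun y _ => ?_
          unfold av prPath
          refine Finset.sum_congr rfl fun ω _ => ?_
          split_ifs <;> simp [hp]
      _ ≤ ∑ y ∈ Y, (1 / 4 : ℝ) := Finset.sum_le_sum fun y _ => av_quarter P hP hirr x y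
      _ = _ := by simp
  have hgoal : prPath P (delta x) n
      (fun ω => (Y.card : ℝ) / 2 ≤ ((V ω).card : ℝ)) =
      ∑ ω, if (Y.card : ℝ) / 2 ≤ ((V ω).card : ℝ) then p ω else 0 := rfl
  rw [hgoal]
  rcases Y.eq_empty_or_nonempty with hY | hY
  · have : ∀ ω, (Y.card : ℝ) / 2 ≤ ((V ω).card : ℝ) := fun ω => by simp [hY]
    simp only [this, if_true, hp1]
    norm_num
  · have hYc : (0 : ℝ) < Y.card := by exact_mod_cast hY.card_pos
    have hle : ∀ ω, (Y.card : ℝ) / 2 * p ω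
        - p ω * ∑ y ∈ Y, (if ∀ i, ω i ≠ y then (1 : ℝ) else 0) ≤
        (Y.card : ℝ) / 2 * (if (Y.card : ℝ) / 2 ≤ ((V ω).card : ℝ) then p ω else 0) := by
      intro ω
      have h := hcard ω
      have h0 := hp0 ω
      have hs : (0 : ℝ) ≤ ∑ y ∈ Y, (if ∀ i, ω i ≠ y then (1 : ℝ) else 0) :=
        Finset.sum_nonneg fun y _ => by split_ifs <;> norm_num
      split_ifs with hE
      · nlinarith [mul_nonneg h0 hs]
      · push Not at hE
        nlinarith
    have hsum := Finset.sum_le_sum fun ω (_ : ω ∈ Finset.univ) => hle ω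
    rw [Finset.sum_sub_distrib, ← Finset.mul_sum, ← Finset.mul_sum, hp1] at hsum
    by_contra! hlt
    have := mul_lt_mul_of_pos_left hlt hYc
    linarith


end Paper
end

section
/- Let P be a Markov chain on a finite state space X with stationary distribution π. Then for every x ∈ X and every n ≥ 0, the relative entropy satisfies D(Pⁿ(x,·) ‖ π) ≤ sep(x,n) · log(1/π_*), where sep(x,n) = max_{y∈X} (1 − Pⁿ(x,y)/π(y)) is the separation distance and π_* = min_y π(y). -/
open Finset
open scoped Classical

namespace Paper

variable {X : Type} [Fintype X] [DecidableEq X]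

theorem isStoch_pow_aux {X : Type} [Fintype X] [DecidableEq X] (P : Matrix X X ℝ)
    (hP : IsStoch P) (n : ℕ) : IsStoch (P ^ n) := by
  induction n with
  | zero =>
    refine ⟨fun x y => ?_, fun x => ?_⟩
    · rw [pow_zero, Matrix.one_apply]; split_ifs <;> norm_num
    · simp [Matrix.one_apply]
  | succ k ih =>
    refine ⟨fun x y => ?_, fun x => ?_⟩
    · rw [pow_succ, Matrix.mul_apply]
      exact Finset.sum_nonneg fun z _ => mul_nonneg (ih.1 x z) (hP.1 z y)
    · simp_rw [pow_succ, Matrix.mul_apply]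
      rw [Finset.sum_comm]
      simp_rw [← Finset.mul_sum, hP.2, mul_one]
      exact ih.2 x

theorem entropy_aux {X : Type} [Fintype X] [Nonempty X] (μ pi : X → ℝ) (s : ℝ)
    (hμ : ∑ y, μ y = 1) (hpos : ∀ y, 0 < pi y) (hsum : ∑ y, pi y = 1)
    (hs1 : s ≤ 1) (ha : ∀ y, 0 ≤ μ y - (1 - s) * pi y) :
    ∑ y, μ y * Real.log (μ y / pi y) ≤ s * Real.log (1 / ⨅ y, pi y) := by
  have hsa : ∑ y, (μ y - (1 - s) * pi y) = s := by
    rw [Finset.sum_sub_distrib, ← Finset.mul_sum, hμ, hsum]; ring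
  have hs0 : 0 ≤ s := hsa ▸ Finset.sum_nonneg fun y _ => ha y
  obtain ⟨y0, hy0⟩ := exists_eq_ciInf_of_finite (f := pi)
  have hm : 0 < ⨅ y, pi y := hy0 ▸ hpos y0
  have hml : ∀ y, (⨅ y, pi y) ≤ pi y := fun y => ciInf_le (Set.finite_range pi).bddBelow y
  have key : ∀ y, μ y * Real.log (μ y / pi y)
      ≤ (μ y - (1 - s) * pi y) * Real.log (1 / ⨅ y, pi y) := by
    intro y
    have hle : μ y - (1 - s) * pi y ≤ s := by
      conv_rhs => rw [← hsa]
      exact Finset.single_le_sum (f := fun y => μ y - (1 - s) * pi y)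
        (fun z _ => ha z) (Finset.mem_univ y)
    have hay := ha y
    have hp := hpos y
    generalize hA : μ y - (1 - s) * pi y = a at *
    have hmu : μ y = (1 - s) * pi y + a := by linarith
    rcases hs0.eq_or_lt with h0 | h0
    · have : a = 0 := by linarith
      rw [hmu, this, ← h0]
      simp [hp.ne']
    · have ht : 0 ≤ a / (s * pi y) := by positivity
      have hc := Real.convexOn_mul_log.2 (show (1 : ℝ) ∈ Set.Ici 0 by simp)
        (show a / (s * pi y) ∈ Set.Ici 0 from ht)
        (show 0 ≤ 1 - s by linarith) hs0 (by ring)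
      have hr : (1 - s) * 1 + s * (a / (s * pi y)) = μ y / pi y := by
        rw [hmu]; field_simp
      simp only [smul_eq_mul] at hc
      rw [hr, Real.log_one] at hc
      have h1 : μ y * Real.log (μ y / pi y) ≤ a * Real.log (a / (s * pi y)) := by
        have := mul_le_mul_of_nonneg_left hc hp.le
        have e1 : pi y * (μ y / pi y * Real.log (μ y / pi y))
            = μ y * Real.log (μ y / pi y) := by field_simp
        have e2 : pi y * ((1 - s) * (1 * 0) + s * (a / (s * pi y) * Real.log (a / (s * pi y))))
            = a * Real.log (a / (s * pi y)) := by
          generalize Real.log (a / (s * pi y)) = l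
          field_simp
          ring
        rwa [e1, e2] at this
      refine h1.trans ?_
      rcases hay.eq_or_lt with h | h
      · simp [← h]
      · refine mul_le_mul_of_nonneg_left (Real.log_le_log (by positivity) ?_) hay
        rw [div_le_div_iff₀ (by positivity) hm]
        calc a * (⨅ y, pi y) ≤ s * pi y := mul_le_mul hle (hml y) hm.le hs0
          _ = 1 * (s * pi y) := (one_mul _).symm
  calc _ ≤ ∑ y, (μ y - (1 - s) * pi y) * Real.log (1 / ⨅ y, pi y) :=
        Finset.sum_le_sum fun y _ => key y
    _ = _ := by rw [← Finset.sum_mul, hsa]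

/-- `D(Pⁿ(x,·) ‖ π) ≤ sep(x,n) · log(1/π_*)`. -/
theorem relEnt_le_sep
    (X : Type) [Fintype X] [DecidableEq X] [Nonempty X]
    (P : Matrix X X ℝ) (pi : X → ℝ)
    (hP : IsStoch P) (hpos : ∀ y, 0 < pi y) (hsum : ∑ y, pi y = 1)
    (hstat : ∀ y, ∑ x, pi x * P x y = pi y)
    (x : X) (n : ℕ) :
    relEnt ((P ^ n) x) pi ≤ sep P pi x n * Real.log (1 / ⨅ y, pi y) := by
  have hn := isStoch_pow_aux P hP n
  unfold relEnt
  refine entropy_aux _ pi _ (hn.2 x) hpos hsum ?_ ?_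
  · exact ciSup_le fun y => by
      have := div_nonneg (hn.1 x y) (hpos y).le
      linarith
  · intro y
    have h : 1 - (P ^ n) x y / pi y ≤ sep P pi x n :=
      le_ciSup (f := fun y => 1 - (P ^ n) x y / pi y) (Set.finite_range _).bddAbove y
    have h2 := mul_le_mul_of_nonneg_right h (hpos y).le
    rw [sub_mul, div_mul_cancel₀ _ (hpos y).ne'] at h2
    linarith

end Paper
end

section
/- Let P be a reversible irreducible aperiodic Markov chain on a finite state space X with stationary distribution π. Then there is an absolute constant C > 0 such that for every 0 < ε < 1/2: τ_tv(√(ε/2)) ≤ τ_ent(ε) ≤ C · τ_tv(1/(2e)) · [log log(1/π_*) + log(1/ε)], where π_* = min_y π(y). (The lower bound follows from Pinsker's inequality 2·d_tv(μ,ν)² ≤ D(μ‖ν) and does not require reversibility.) -/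
open Finset
open scoped Classical

namespace Paper

variable {X : Type} [Fintype X] [DecidableEq X]

section helpers

theorem scalar_pinsker {r : ℝ} (hr : 0 < r) :
    3 * (r - 1) ^ 2 ≤ (2 * r + 4) * (r * Real.log r - r + 1) := by
  let k : ℝ → ℝ := fun r => Real.log r - 1 + 1 / r - 3 * (r - 1) ^ 2 / (2 * r * (r + 2))
  have hd : ∀ x : ℝ, 0 < x → HasDerivAt k ((x - 1) ^ 3 / (x ^ 2 * (x + 2) ^ 2)) x := by
    intro x hx
    have h1 := Real.hasDerivAt_log hx.ne'
    have h2 := (hasDerivAt_id x).inv hx.ne'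
    have h3 : HasDerivAt (fun y : ℝ => 3 * (y - 1) ^ 2) (3 * (2 * (x - 1))) x := by
      have := (((hasDerivAt_id x).sub_const 1).pow 2).const_mul 3
      refine this.congr_deriv ?_
      norm_num
    have h4 : HasDerivAt (fun y : ℝ => 2 * y * (y + 2)) (2 * (x + 2) + 2 * x) x := by
      have := ((hasDerivAt_id x).const_mul 2).mul ((hasDerivAt_id x).add_const 2)
      refine this.congr_deriv ?_
      norm_num
    have h5 := ((h1.sub_const 1).add h2).sub (h3.div h4 (by positivity))
    have hk : k = (((fun y => Real.log y - 1) + (id : ℝ → ℝ)⁻¹) -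
        (fun y : ℝ => 3 * (y - 1) ^ 2) / (fun y : ℝ => 2 * y * (y + 2))) := by
      funext y
      simp [k]
    rw [hk]
    refine h5.congr_deriv ?_
    try simp only [id]
    field_simp
    ring
  have hk1 : k 1 = 0 := by simp [k]
  have hcont : ∀ s : Set ℝ, s ⊆ Set.Ioi 0 → ContinuousOn k s := fun s hs x hx =>
    (hd x (hs hx)).continuousAt.continuousWithinAt
  have hk0 : 0 ≤ k r := by
    rcases le_total r 1 with h | h
    · have : AntitoneOn k (Set.Icc r 1) := by
        apply antitoneOn_of_deriv_nonpos (convex_Icc r 1)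
          (hcont _ fun x hx => lt_of_lt_of_le hr hx.1)
        · intro x hx
          rw [interior_Icc] at hx
          exact (hd x (hr.trans hx.1)).differentiableAt.differentiableWithinAt
        · intro x hx
          rw [interior_Icc] at hx
          rw [(hd x (hr.trans hx.1)).deriv]
          apply div_nonpos_of_nonpos_of_nonneg _ (by positivity)
          have : x - 1 ≤ 0 := by linarith [hx.2]
          exact Odd.pow_nonpos (by decide) this
      have := this (Set.left_mem_Icc.2 h) (Set.right_mem_Icc.2 h) h
      linarith
    · have : MonotoneOn k (Set.Icc 1 r) := by
        apply monotoneOn_of_deriv_nonneg (convex_Icc 1 r)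
          (hcont _ fun x hx => lt_of_lt_of_le one_pos hx.1)
        · intro x hx
          rw [interior_Icc] at hx
          exact (hd x (one_pos.trans hx.1)).differentiableAt.differentiableWithinAt
        · intro x hx
          rw [interior_Icc] at hx
          rw [(hd x (one_pos.trans hx.1)).deriv]
          have : 0 ≤ x - 1 := by linarith [hx.1]
          positivity
      have := this (Set.left_mem_Icc.2 h) (Set.right_mem_Icc.2 h) h
      linarith
  have e : (2 * r + 4) * (r * Real.log r - r + 1) - 3 * (r - 1) ^ 2
      = (2 * r * (r + 2)) * k r := by
    simp only [k]
    field_simp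
    ring
  have : 0 ≤ (2 * r * (r + 2)) * k r := by positivity
  linarith

theorem scalar_pinsker' {r : ℝ} (hr : 0 ≤ r) :
    3 * (r - 1) ^ 2 ≤ (2 * r + 4) * (r * Real.log r - r + 1) := by
  rcases hr.eq_or_lt with h | h
  · subst h; norm_num
  · exact scalar_pinsker h

theorem two_dtv (μ pi : X → ℝ) (h : ∑ y, μ y = ∑ y, pi y) :
    ∑ y, |μ y - pi y| = 2 * dtv μ pi := by
  have h1 : dtv μ pi = ∑ y, (|μ y - pi y| - (μ y - pi y)) / 2 := by
    unfold dtv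
    rw [Finset.sum_filter]
    refine Finset.sum_congr rfl fun y _ => ?_
    split_ifs with hy
    · rw [abs_of_neg (by linarith)]; ring
    · rw [abs_of_nonneg (by linarith)]; ring
  rw [h1, ← Finset.sum_div, Finset.sum_sub_distrib, Finset.sum_sub_distrib, h]
  ring

theorem relEnt_eq (μ pi : X → ℝ) (hpi : ∀ y, 0 < pi y) (h : ∑ y, μ y = ∑ y, pi y) :
    relEnt μ pi = ∑ y, pi y * (μ y / pi y * Real.log (μ y / pi y) - μ y / pi y + 1) := by
  have : ∀ y, pi y * (μ y / pi y * Real.log (μ y / pi y) - μ y / pi y + 1)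
      = μ y * Real.log (μ y / pi y) - μ y + pi y := by
    intro y
    have h1 : pi y * (μ y / pi y) = μ y := mul_div_cancel₀ _ (hpi y).ne'
    calc _ = (pi y * (μ y / pi y)) * Real.log (μ y / pi y) - pi y * (μ y / pi y) + pi y := by ring
      _ = _ := by rw [h1]
  simp only [this, Finset.sum_add_distrib, Finset.sum_sub_distrib, h, relEnt]
  ring

theorem pinsker (μ pi : X → ℝ) (hμ : ∀ y, 0 ≤ μ y) (hpi : ∀ y, 0 < pi y)
    (h : ∑ y, μ y = 1) (h' : ∑ y, pi y = 1) : 2 * dtv μ pi ^ 2 ≤ relEnt μ pi := by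
  have hr : ∀ y, 0 ≤ μ y / pi y := fun y => div_nonneg (hμ y) (hpi y).le
  have hsc := fun y => scalar_pinsker' (hr y)
  have hφ : ∀ y, 0 ≤ μ y / pi y * Real.log (μ y / pi y) - μ y / pi y + 1 := by
    intro y
    have h1 := hr y
    have h2 := hsc y
    by_contra hc
    push Not at hc
    nlinarith [sq_nonneg (μ y / pi y - 1)]
  have hm : ∀ y, pi y * (μ y / pi y) = μ y := fun y => mul_div_cancel₀ _ (hpi y).ne'
  have hcs := Finset.sum_sq_le_sum_mul_sum_of_sq_le_mul (s := Finset.univ)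
    (r := fun y => |μ y - pi y|)
    (f := fun y => pi y * ((2 * (μ y / pi y) + 4) / 3))
    (g := fun y => pi y * (μ y / pi y * Real.log (μ y / pi y) - μ y / pi y + 1))
    (fun y _ => by have := hr y; have := hpi y; positivity)
    (fun y _ => mul_nonneg (hpi y).le (hφ y))
    (fun y _ => by
      rw [sq_abs]
      have e : (μ y - pi y) ^ 2 = pi y ^ 2 * (μ y / pi y - 1) ^ 2 := by
        have := hm y
        calc _ = (pi y * (μ y / pi y) - pi y) ^ 2 := by rw [this]
          _ = _ := by ring
      rw [e]
      have := mul_le_mul_of_nonneg_left (hsc y) (sq_nonneg (pi y))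
      nlinarith)
  rw [← relEnt_eq μ pi hpi (h.trans h'.symm), two_dtv μ pi (h.trans h'.symm)] at hcs
  have e : ∑ y, pi y * ((2 * (μ y / pi y) + 4) / 3) = 2 := by
    have : ∀ y, pi y * ((2 * (μ y / pi y) + 4) / 3) = 2 / 3 * μ y + 4 / 3 * pi y := by
      intro y
      calc _ = 2 / 3 * (pi y * (μ y / pi y)) + 4 / 3 * pi y := by ring
        _ = _ := by rw [hm]
    simp only [this, Finset.sum_add_distrib, ← Finset.mul_sum, h, h']
    norm_num
  rw [e] at hcs
  linarith

theorem relEnt_le (μ pi : X → ℝ) (L : ℝ) (hμ : ∀ y, 0 ≤ μ y) (hpi : ∀ y, 0 < pi y)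
    (h : ∑ y, μ y = 1) (h' : ∑ y, pi y = 1) (hL : 0 ≤ L)
    (hLp : ∀ y, 1 ≤ μ y / pi y → Real.log (μ y / pi y) ≤ L) :
    relEnt μ pi ≤ dtv μ pi * (1 + L) := by
  have hr : ∀ y, 0 ≤ μ y / pi y := fun y => div_nonneg (hμ y) (hpi y).le
  have hm : ∀ y, pi y * (μ y / pi y) = μ y := fun y => mul_div_cancel₀ _ (hpi y).ne'
  have hd := two_dtv μ pi (h.trans h'.symm)
  have key : ∀ y, pi y * (μ y / pi y * Real.log (μ y / pi y) - μ y / pi y + 1)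
      ≤ |μ y - pi y| * ((1 + L) / 2) + (μ y - pi y) * ((L - 1) / 2) := by
    intro y
    have e : μ y - pi y = pi y * (μ y / pi y - 1) := by rw [mul_sub, hm]; ring
    rw [e, abs_mul, abs_of_pos (hpi y), mul_assoc, mul_assoc, ← mul_add]
    apply mul_le_mul_of_nonneg_left _ (hpi y).le
    have hr0 := hr y
    have hl := hLp y
    generalize μ y / pi y = r at *
    rcases le_total 1 r with h1 | h1
    · rw [abs_of_nonneg (by linarith)]
      have h2 : Real.log r ≤ r - 1 := Real.log_le_sub_one_of_pos (by linarith)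
      have h3 := mul_le_mul_of_nonneg_left (hl h1) (by linarith : 0 ≤ r - 1)
      nlinarith
    · rw [abs_of_nonpos (by linarith)]
      have h2 : Real.log r ≤ 0 := Real.log_nonpos hr0 h1
      nlinarith
  rw [relEnt_eq μ pi hpi (h.trans h'.symm)]
  refine (Finset.sum_le_sum fun y _ => key y).trans ?_
  rw [Finset.sum_add_distrib, ← Finset.sum_mul, ← Finset.sum_mul, hd, Finset.sum_sub_distrib, h, h']
  apply le_of_eq; ring

theorem IsStoch.pow {P : Matrix X X ℝ} (h : IsStoch P) (n : ℕ) : IsStoch (P ^ n) := by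
  induction n with
  | zero =>
    refine ⟨fun x y => ?_, fun x => ?_⟩
    · rw [pow_zero, Matrix.one_apply]; split_ifs <;> norm_num
    · simp [Matrix.one_apply]
  | succ n ih =>
    refine ⟨fun x y => ?_, fun x => ?_⟩
    · rw [pow_succ, Matrix.mul_apply]
      exact Finset.sum_nonneg fun z _ => mul_nonneg (ih.1 _ _) (h.1 _ _)
    · simp only [pow_succ, Matrix.mul_apply]
      rw [Finset.sum_comm]
      simp only [← Finset.mul_sum, h.2, mul_one, ih.2]

theorem stat_pow {P : Matrix X X ℝ} {pi : X → ℝ} (h : ∀ y, ∑ x, pi x * P x y = pi y) (n : ℕ) :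
    ∀ y, ∑ x, pi x * (P ^ n) x y = pi y := by
  induction n with
  | zero => intro y; simp [Matrix.one_apply]
  | succ n ih =>
    intro y
    simp only [pow_succ, Matrix.mul_apply, Finset.mul_sum]
    rw [Finset.sum_comm]
    simp only [← mul_assoc, ← Finset.sum_mul, ih, h]

/-- generic contraction: if `Q = c pi + R` with rows of `R` of L1 norm at most `a`. -/
theorem contract (Q : Matrix X X ℝ) (pi : X → ℝ) (c a : ℝ)
    (hQ : ∀ x, ∑ y, |Q x y - c * pi y| ≤ a) (f : X → ℝ) (hf : ∑ x, f x = 0) :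
    ∑ y, |∑ x, f x * Q x y| ≤ a * ∑ x, |f x| := by
  calc ∑ y, |∑ x, f x * Q x y| = ∑ y, |∑ x, f x * (Q x y - c * pi y)| := by
        refine Finset.sum_congr rfl fun y _ => ?_
        simp only [mul_sub, Finset.sum_sub_distrib, ← Finset.sum_mul, hf]
        simp
    _ ≤ ∑ y, ∑ x, |f x| * |Q x y - c * pi y| := by
        refine Finset.sum_le_sum fun y _ => (Finset.abs_sum_le_sum_abs _ _).trans ?_
        simp only [abs_mul]; rfl
    _ = ∑ x, |f x| * ∑ y, |Q x y - c * pi y| := by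
        rw [Finset.sum_comm]; simp only [Finset.mul_sum]
    _ ≤ ∑ x, |f x| * a :=
        Finset.sum_le_sum fun x _ => mul_le_mul_of_nonneg_left (hQ x) (abs_nonneg _)
    _ = _ := by rw [← Finset.sum_mul, mul_comm]

theorem contract_step {P : Matrix X X ℝ} {pi : X → ℝ} (hP : IsStoch P)
    (hs : ∀ y, ∑ x, pi x * P x y = pi y) (h' : ∑ y, pi y = 1) (c a : ℝ) (m n : ℕ)
    (hQ : ∀ x, ∑ y, |(P ^ m) x y - c * pi y| ≤ a) (x : X) :
    ∑ y, |(P ^ (n + m)) x y - pi y| ≤ a * ∑ y, |(P ^ n) x y - pi y| := by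
  have := contract (P ^ m) pi c a hQ (fun y => (P ^ n) x y - pi y) (by
    rw [Finset.sum_sub_distrib, (hP.pow n).2, h', sub_self])
  refine le_trans (le_of_eq ?_) this
  refine Finset.sum_congr rfl fun y _ => ?_
  simp only [sub_mul, Finset.sum_sub_distrib, stat_pow hs m, pow_add, Matrix.mul_apply]

theorem contract_iter {P : Matrix X X ℝ} {pi : X → ℝ} (hP : IsStoch P) (hpi : ∀ y, 0 < pi y)
    (hs : ∀ y, ∑ x, pi x * P x y = pi y) (h' : ∑ y, pi y = 1) (c a : ℝ) (ha : 0 ≤ a) (m : ℕ)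
    (hQ : ∀ x, ∑ y, |(P ^ m) x y - c * pi y| ≤ a) (k n : ℕ) (hn : k * m ≤ n) (x : X) :
    dtv ((P ^ n) x) pi ≤ a ^ k := by
  have h0 : ∀ j, ∑ y, |(P ^ j) x y - pi y| ≤ 2 := by
    intro j
    calc _ ≤ ∑ y, ((P ^ j) x y + pi y) := by
          refine Finset.sum_le_sum fun y _ => ?_
          rw [abs_le]; constructor <;> linarith [(hP.pow j).1 x y, hpi y]
      _ = 2 := by rw [Finset.sum_add_distrib, (hP.pow j).2, h']; norm_num
  have h1 : ∀ k j, ∑ y, |(P ^ (j + k * m)) x y - pi y| ≤ 2 * a ^ k := by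
    intro k j
    induction k with
    | zero => simpa using h0 j
    | succ k ih =>
      have := contract_step hP hs h' c a m (j + k * m) hQ x
      rw [show j + (k + 1) * m = j + k * m + m by ring]
      refine this.trans ((mul_le_mul_of_nonneg_left ih ha).trans (le_of_eq ?_))
      ring
  have h2 := h1 k (n - k * m)
  rw [Nat.sub_add_cancel hn, two_dtv ((P ^ n) x) pi (((hP.pow n).2 x).trans h'.symm)] at h2
  linarith

theorem exists_contract [Nonempty X] {P : Matrix X X ℝ} {pi : X → ℝ} (hP : IsStoch P)
    (hpi : ∀ y, 0 < pi y) (h' : ∑ y, pi y = 1) (N : ℕ) (hN : ∀ x y, 0 < (P ^ N) x y) :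
    ∃ c a : ℝ, 0 ≤ a ∧ a < 1 ∧ ∀ x, ∑ y, |(P ^ N) x y - c * pi y| ≤ a := by
  obtain ⟨p, hp⟩ := Finite.exists_min (fun p : X × X => (P ^ N) p.1 p.2 / pi p.2)
  set c := (P ^ N) p.1 p.2 / pi p.2 with hc
  have hc0 : 0 < c := div_pos (hN _ _) (hpi _)
  have hle : ∀ x y, 0 ≤ (P ^ N) x y - c * pi y := fun x y => by
    have := hp (x, y)
    simp only at this
    rw [le_div_iff₀ (hpi y)] at this
    linarith
  have hsum : ∀ x, ∑ y, |(P ^ N) x y - c * pi y| = 1 - c := by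
    intro x
    simp only [abs_of_nonneg (hle x _)]
    rw [Finset.sum_sub_distrib, ← Finset.mul_sum, h', (hP.pow N).2, mul_one]
  refine ⟨c, 1 - c, ?_, by linarith, fun x => (hsum x).le⟩
  obtain ⟨x⟩ := (inferInstance : Nonempty X)
  rw [← hsum x]
  exact Finset.sum_nonneg fun _ _ => abs_nonneg _

theorem tv_nonempty [Nonempty X] {P : Matrix X X ℝ} {pi : X → ℝ} (hP : IsStoch P)
    (hpi : ∀ y, 0 < pi y) (hs : ∀ y, ∑ x, pi x * P x y = pi y)
    (h' : ∑ y, pi y = 1) (N : ℕ) (hN : ∀ x y, 0 < (P ^ N) x y) (δ : ℝ) (hδ : 0 < δ) :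
    ∃ n', ∀ n ≥ n', ∀ x, dtv ((P ^ n) x) pi ≤ δ := by
  obtain ⟨c, a, ha, ha1, hQ⟩ := exists_contract hP hpi h' N hN
  obtain ⟨k, hk⟩ := exists_pow_lt_of_lt_one hδ ha1
  exact ⟨k * N, fun n hn x => (contract_iter hP hpi hs h' c a ha N hQ k n hn x).trans hk.le⟩

theorem num_bound {L b : ℝ} (hL : Real.log 2 ≤ L) (hb : Real.log 2 ≤ b) :
    Real.log (1 + L) + b + 1 ≤ 11 * (Real.log L + b) := by
  have l2 := Real.log_two_gt_d9
  have hL0 : 0 < L := by linarith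
  have h1 : Real.log (1 + L) ≤ Real.log L + 1.5 := by
    have e : 1 + L = L * (1 + 1 / L) := by field_simp; ring
    have h3 : 1 / L ≤ 1.5 := by rw [div_le_iff₀ hL0]; linarith
    rw [e, Real.log_mul hL0.ne' (by positivity)]
    have := Real.log_le_sub_one_of_pos (show 0 < 1 + 1 / L by positivity)
    linarith
  have h2 : -0.4431 ≤ Real.log L := by
    have := Real.one_sub_inv_le_log_of_pos hL0
    have h3 : L⁻¹ ≤ 1.4431 := by
      rw [inv_eq_one_div, div_le_iff₀ hL0]; linarith
    linarith
  linarith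

end helpers

/-- For a reversible irreducible aperiodic chain, for `0 < ε < 1/2`:
`τ_tv(√(ε/2)) ≤ τ_ent(ε) ≤ C τ_tv(1/(2e)) [log log(1/π_*) + log(1/ε)]`
for an absolute constant `C > 0`. -/
theorem tauEnt_between_tauTV :
    ∃ C : ℝ, 0 < C ∧
      ∀ (X : Type) [Fintype X] [DecidableEq X] [Nonempty X]
        (P : Matrix X X ℝ) (pi : X → ℝ),
        IsStoch P → (∀ y, 0 < pi y) → (∑ y, pi y) = 1 →
        (∀ x y, pi x * P x y = pi y * P y x) →
        (∃ n, ∀ x y, 0 < (P ^ n) x y) →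
        ∀ ε : ℝ, 0 < ε → ε < 1 / 2 →
          tauTV P pi (Real.sqrt (ε / 2)) ≤ tauEnt P pi ε ∧
          (tauEnt P pi ε : ℝ) ≤
            C * (tauTV P pi (2 * Real.exp 1)⁻¹ : ℝ) *
              (Real.log (Real.log (1 / ⨅ y, pi y)) + Real.log (1 / ε)) := by
  refine ⟨11, by norm_num, ?_⟩
  intro X _ _ _ P pi hP hpi h' hrev hN ε hε hε2
  obtain ⟨N, hN⟩ := hN
  have hs : ∀ y, ∑ x, pi x * P x y = pi y := fun y => by
    simp only [hrev _ y, ← Finset.mul_sum, hP.2, mul_one]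
  have hpi1 : ∀ y, pi y ≤ 1 := fun y => by
    rw [← h']; exact Finset.single_le_sum (fun z _ => (hpi z).le) (Finset.mem_univ y)
  obtain ⟨y0, hy0⟩ := Finite.exists_min pi
  have hinf : ⨅ y, pi y = pi y0 :=
    le_antisymm (ciInf_le (Set.finite_range pi).bddBelow y0) (le_ciInf hy0)
  rw [hinf]
  set L := Real.log (1 / pi y0) with hLdef
  have hL0 : 0 ≤ L := Real.log_nonneg (by rw [le_div_iff₀ (hpi y0)]; linarith [hpi1 y0])
  have hent : ∀ n x, relEnt ((P ^ n) x) pi ≤ dtv ((P ^ n) x) pi * (1 + L) := by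
    intro n x
    refine relEnt_le _ pi L ((hP.pow n).1 x) hpi ((hP.pow n).2 x) h' hL0 fun y hy => ?_
    apply Real.log_le_log (by linarith)
    have h1 : (P ^ n) x y ≤ 1 := by
      rw [← (hP.pow n).2 x]
      exact Finset.single_le_sum (fun z _ => (hP.pow n).1 x z) (Finset.mem_univ y)
    exact div_le_div₀ zero_le_one h1 (hpi y0) (hy0 y)
  constructor
  · have hne : {n' | ∀ n ≥ n', ∀ x, relEnt ((P ^ n) x) pi ≤ ε}.Nonempty := by
      obtain ⟨m, hm⟩ := tv_nonempty hP hpi hs h' N hN (ε / (1 + L)) (by positivity)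
      refine ⟨m, fun n hn x => (hent n x).trans ?_⟩
      have := hm n hn x
      rwa [le_div_iff₀ (by positivity)] at this
    have hmem := Nat.sInf_mem hne
    refine Nat.sInf_le fun n hn x => ?_
    have h1 := hmem n hn x
    have h2 := pinsker ((P ^ n) x) pi ((hP.pow n).1 x) hpi ((hP.pow n).2 x) h'
    apply Real.le_sqrt_of_sq_le
    linarith
  · have hb : Real.log 2 ≤ Real.log (1 / ε) := by
      apply Real.log_le_log (by norm_num)
      rw [le_div_iff₀ hε]; linarith
    rcases subsingleton_or_nontrivial X with hX | hX
    · have hz : tauEnt P pi ε = 0 := by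
        apply Nat.le_zero.1
        refine Nat.sInf_le fun n _ x => ?_
        have h1 := (hP.pow n).2 x
        rw [Fintype.sum_subsingleton _ x] at h1 h'
        rw [relEnt, Fintype.sum_subsingleton _ x, h1, h']
        simp [hε.le]
      have hL : L = 0 := by
        rw [Fintype.sum_subsingleton _ y0] at h'
        rw [hLdef, h']; simp
      rw [hz, hL, Real.log_zero, zero_add]
      have : 0 < Real.log 2 := Real.log_pos (by norm_num)
      have : 0 ≤ Real.log (1 / ε) := by linarith
      push_cast
      positivity
    · have hL2 : Real.log 2 ≤ L := by
        apply Real.log_le_log (by norm_num)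
        rw [le_div_iff₀ (hpi y0)]
        obtain ⟨z, hz⟩ := exists_ne y0
        have h1 := Finset.sum_le_univ_sum_of_nonneg (s := {y0, z}) (fun y => (hpi y).le)
        rw [Finset.sum_pair hz.symm, h'] at h1
        linarith [hy0 z]
      have hnb := num_bound hL2 hb
      have hτ := Nat.sInf_mem (tv_nonempty hP hpi hs h' N hN (2 * Real.exp 1)⁻¹ (by positivity))
      change tauTV P pi (2 * Real.exp 1)⁻¹ ∈ _ at hτ
      set τ := tauTV P pi (2 * Real.exp 1)⁻¹
      have hQ : ∀ x, ∑ y, |(P ^ τ) x y - 1 * pi y| ≤ (Real.exp 1)⁻¹ := by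
        intro x
        have h1 : dtv ((P ^ τ) x) pi ≤ (2 * Real.exp 1)⁻¹ := hτ τ le_rfl x
        simp only [one_mul]
        rw [two_dtv ((P ^ τ) x) pi (((hP.pow τ).2 x).trans h'.symm)]
        rw [mul_inv] at h1
        linarith
      set k := ⌈Real.log (1 + L) + Real.log (1 / ε)⌉₊ with hk
      have hk1 : Real.log (1 + L) + Real.log (1 / ε) ≤ k := Nat.le_ceil _
      have l2 : 0 < Real.log 2 := Real.log_pos (by norm_num)
      have hk2 : (k : ℝ) < Real.log (1 + L) + Real.log (1 / ε) + 1 :=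
        Nat.ceil_lt_add_one (add_nonneg (Real.log_nonneg (by linarith)) (by linarith))
      have hle : tauEnt P pi ε ≤ k * τ := by
        refine Nat.sInf_le fun n hn x => (hent n x).trans ?_
        have h1 := contract_iter hP hpi hs h' 1 _ (by positivity) τ hQ k n hn x
        have h2 : (1 + L) / ε ≤ Real.exp 1 ^ k := by
          rw [← Real.exp_nat_mul, mul_one, ← Real.log_le_iff_le_exp (by positivity), div_eq_mul_one_div,
            Real.log_mul (by positivity) (by positivity)]
          exact hk1
        have h3 := mul_le_mul_of_nonneg_right h1 (by positivity : 0 ≤ 1 + L)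
        refine h3.trans ?_
        rw [inv_pow, inv_mul_le_iff₀ (by positivity)]
        rwa [div_le_iff₀ hε] at h2
      have hle' : (tauEnt P pi ε : ℝ) ≤ k * τ := by exact_mod_cast hle
      have h4 : (k : ℝ) * τ ≤ (11 * (Real.log L + Real.log (1 / ε))) * τ :=
        mul_le_mul_of_nonneg_right (by linarith) (Nat.cast_nonneg _)
      linarith

end Paper
end

section
/- Consider the m-state lamplighter chain on the discrete cycle Z_n (n ≥ 2, m ≥ 2): the state space is {0,…,m−1}^{Z_n} × Z_n, and at each step the lamplighter takes one step of the random walk on the cycle while the lamp at each vertex it visits is replaced by an independent uniform value in {0,…,m−1}. Its stationary distribution is uniform. Then the entropy mixing time satisfies τ_ent = Θ(n²·(log n + log log m)); that is, there exist absolute constants c₁, c₂ > 0 such that c₁·n²·log(n·log m) ≤ τ_ent ≤ c₂·n²·(log n + log log m). -/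
open Finset
open scoped Classical

namespace Paper

variable {X : Type} [Fintype X] [DecidableEq X]

/-- Lazy simple random walk on the discrete cycle `ZMod n`. -/
noncomputable def cycleWalk (n : ℕ) [NeZero n] : Matrix (ZMod n) (ZMod n) ℝ :=
  fun x y => (if y = x then 1 / 2 else 0) + (if y = x + 1 then 1 / 4 else 0) +
    (if y = x - 1 then 1 / 4 else 0)

section Helpers

set_option linter.unusedSectionVars false

variable {V : Type} [Fintype V] [DecidableEq V]

noncomputable def Phi (m : ℕ) (g : V → Fin m) (W : Finset V) (f : V → Fin m) : ℝ :=
  ∏ z, if z ∈ W then 1 else (if f z = g z then (m : ℝ) else 0)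

lemma Phi_nonneg (m : ℕ) (g : V → Fin m) (W : Finset V) (f : V → Fin m) : 0 ≤ Phi m g W f := by
  unfold Phi
  apply Finset.prod_nonneg
  intro z _
  split_ifs <;> positivity

lemma Phi_eq (m : ℕ) (g : V → Fin m) (W : Finset V) (f : V → Fin m) :
    Phi m g W f = if ∀ z, z ∉ W → f z = g z then (m : ℝ) ^ (Wᶜ.card) else 0 := by
  unfold Phi
  split_ifs with h
  · have : ∀ z ∈ (Finset.univ : Finset V), (if z ∈ W then (1:ℝ) else (if f z = g z then (m : ℝ) else 0))
        = if z ∈ Wᶜ then (m:ℝ) else 1 := by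
      intro z _
      by_cases hz : z ∈ W
      · simp [hz]
      · simp [hz, h z hz]
    rw [Finset.prod_congr rfl this]
    rw [Finset.prod_ite_mem]
    simp
  · push Not at h
    obtain ⟨z, hz, hz'⟩ := h
    apply Finset.prod_eq_zero (Finset.mem_univ z)
    simp [hz, hz']

lemma lamp_eq (Pb : Matrix V V ℝ) (m : ℕ) (f f' : V → Fin m) (x x' : V) :
    lampChain Pb m (f, x) (f', x') =
      Pb x x' * ∏ z, if z ∈ ({x, x'} : Finset V) then (m : ℝ)⁻¹
        else (if f' z = f z then 1 else 0) := by
  unfold lampChain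
  simp only
  split_ifs with h
  · congr 1
    have : ∀ z ∈ (Finset.univ : Finset V), (if z ∈ ({x, x'} : Finset V) then (m : ℝ)⁻¹
        else (if f' z = f z then 1 else 0)) = if z ∈ ({x, x'} : Finset V) then (m : ℝ)⁻¹ else 1 := by
      intro z _
      by_cases hz : z ∈ ({x, x'} : Finset V)
      · simp only [hz, if_true]
      · have hz2 := hz
        simp only [Finset.mem_insert, Finset.mem_singleton, not_or] at hz
        simp only [hz2, if_false, h z hz.1 hz.2, if_true]
    rw [Finset.prod_congr rfl this, Finset.prod_ite_mem]
    simp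
  · push Not at h
    obtain ⟨z, hz, hz', hz2⟩ := h
    symm
    apply mul_eq_zero_of_right
    apply Finset.prod_eq_zero (Finset.mem_univ z)
    simp [hz, hz', hz2]

lemma lamp_step (Pb : Matrix V V ℝ) (m : ℕ) (hm : 0 < m) (g : V → Fin m) (W : Finset V)
    (f : V → Fin m) (x x' : V) :
    ∑ f', lampChain Pb m (f, x) (f', x') * Phi m g W f' =
      Pb x x' * Phi m g (W ∪ {x, x'}) f := by
  have hm' : (m : ℝ) ≠ 0 := by positivity
  simp only [lamp_eq, Phi, mul_assoc, ← Finset.prod_mul_distrib]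
  rw [← Finset.mul_sum]
  congr 1
  have := Finset.prod_univ_sum (fun _ : V => (Finset.univ : Finset (Fin m)))
    (fun z a => (if z ∈ ({x, x'} : Finset V) then (m : ℝ)⁻¹
        else (if a = f z then 1 else 0)) * (if z ∈ W then 1 else (if a = g z then (m : ℝ) else 0)))
  rw [Fintype.piFinset_univ] at this
  rw [← this]
  apply Finset.prod_congr rfl
  intro z _
  by_cases h1 : z ∈ ({x, x'} : Finset V)
  · simp only [h1, if_true, Finset.mem_union, or_true]
    by_cases h2 : z ∈ W
    · simp [h2, hm']
    · simp [h2, hm']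
  · simp only [h1, if_false, Finset.mem_union, or_false]
    by_cases h2 : z ∈ W
    · simp [h2]
    · simp [h2, eq_comm]

lemma lamp_stepV (Pb : Matrix V V ℝ) (m : ℕ) (hm : 0 < m) (g : V → Fin m) (W : Finset V)
    (a : V → ℝ) :
    (lampChain Pb m).mulVec (fun q => a q.2 * Phi m g W q.1) =
      fun p => ∑ x', Pb p.2 x' * a x' * Phi m g (W ∪ {p.2, x'}) p.1 := by
  funext p
  obtain ⟨f, x⟩ := p
  simp only [Matrix.mulVec, dotProduct]
  rw [Fintype.sum_prod_type_right]
  apply Finset.sum_congr rfl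
  intro x' _
  have := lamp_step Pb m hm g W f x x'
  rw [mul_right_comm, ← this, Finset.sum_mul]
  apply Finset.sum_congr rfl
  intro f' _
  ring

lemma lamp_nonneg (Pb : Matrix V V ℝ) (hP : ∀ x y, 0 ≤ Pb x y) (m : ℕ) (p q) :
    0 ≤ lampChain Pb m p q := by
  unfold lampChain
  split_ifs
  · exact mul_nonneg (hP _ _) (by positivity)
  · exact le_rfl

lemma lamp_sum (Pb : Matrix V V ℝ) (hP : ∀ x, ∑ y, Pb x y = 1) (m : ℕ) (hm : 0 < m) (p) :
    ∑ q, lampChain Pb m p q = 1 := by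
  have := congrFun (lamp_stepV Pb m hm (fun _ => ⟨0, hm⟩) Finset.univ (fun _ => 1)) p
  simp only [Matrix.mulVec, dotProduct] at this
  have h1 : ∀ g f : V → Fin m, ∀ W : Finset V, Phi m g (Finset.univ ∪ W) f = 1 := by
    intro g f W; simp [Phi]
  have h2 : ∀ g f : V → Fin m, Phi m g Finset.univ f = 1 := by
    intro g f; simp [Phi]
  simp only [h1, h2, mul_one, hP] at this
  exact this

variable {Y : Type} [Fintype Y] [DecidableEq Y]

lemma pow_nonneg' (P : Matrix Y Y ℝ) (hP : ∀ x y, 0 ≤ P x y) (t : ℕ) (x y) : 0 ≤ (P ^ t) x y := by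
  induction t generalizing x y with
  | zero => rw [pow_zero, Matrix.one_apply]; split_ifs <;> norm_num
  | succ t ih =>
    rw [pow_succ, Matrix.mul_apply]
    exact Finset.sum_nonneg fun z _ => mul_nonneg (ih _ _) (hP _ _)

lemma pow_sum (P : Matrix Y Y ℝ) (hP : ∀ x, ∑ y, P x y = 1) (t : ℕ) (x) : ∑ y, (P ^ t) x y = 1 := by
  induction t generalizing x with
  | zero => simp [Matrix.one_apply]
  | succ t ih =>
    simp only [pow_succ, Matrix.mul_apply]
    rw [Finset.sum_comm]
    simp only [← Finset.mul_sum, hP, mul_one, ih]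

lemma pow_sum_col (P : Matrix Y Y ℝ) (hP : ∀ y, ∑ x, P x y = 1) (t : ℕ) (y) :
    ∑ x, (P ^ t) x y = 1 := by
  induction t generalizing y with
  | zero => simp [Matrix.one_apply]
  | succ t ih =>
    simp only [pow_succ, Matrix.mul_apply]
    rw [Finset.sum_comm]
    simp only [← Finset.sum_mul, ih, one_mul, hP]

lemma mulVec_mono' (P : Matrix Y Y ℝ) (hP : ∀ x y, 0 ≤ P x y) (a b : Y → ℝ) (h : ∀ x, a x ≤ b x)
    (x) : P.mulVec a x ≤ P.mulVec b x := by
  simp only [Matrix.mulVec, dotProduct]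
  exact Finset.sum_le_sum fun y _ => mul_le_mul_of_nonneg_left (h y) (hP _ _)

lemma pow_super (P : Matrix Y Y ℝ) (hP : ∀ x y, 0 ≤ P x y) (h : Y → ℝ) (l : ℝ) (hl : 0 ≤ l)
    (hh : ∀ x, P.mulVec h x ≤ l * h x) (t : ℕ) (x) : (P ^ t).mulVec h x ≤ l ^ t * h x := by
  induction t generalizing x with
  | zero => simp
  | succ t ih =>
    rw [pow_succ, ← Matrix.mulVec_mulVec]
    refine (mulVec_mono' _ (pow_nonneg' P hP t) _ (fun x => l * h x) hh x).trans ?_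
    have : (P ^ t).mulVec (fun x => l * h x) x = l * (P^t).mulVec h x := by
      simp only [Matrix.mulVec, dotProduct, Finset.mul_sum]
      exact Finset.sum_congr rfl fun _ _ => by ring
    rw [this, pow_succ]
    nlinarith [mul_le_mul_of_nonneg_left (ih x) hl]

lemma pow_sub (P : Matrix Y Y ℝ) (hP : ∀ x y, 0 ≤ P x y) (h : Y → ℝ) (l : ℝ) (hl : 0 ≤ l)
    (hh : ∀ x, l * h x ≤ P.mulVec h x) (t : ℕ) (x) : l ^ t * h x ≤ (P ^ t).mulVec h x := by
  induction t generalizing x with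
  | zero => simp
  | succ t ih =>
    rw [pow_succ P, ← Matrix.mulVec_mulVec]
    refine le_trans ?_ (mulVec_mono' _ (pow_nonneg' P hP t) (fun x => l * h x) _ hh x)
    have : (P ^ t).mulVec (fun x => l * h x) x = l * (P^t).mulVec h x := by
      simp only [Matrix.mulVec, dotProduct, Finset.mul_sum]
      exact Finset.sum_congr rfl fun _ _ => by ring
    rw [this, pow_succ]
    nlinarith [mul_le_mul_of_nonneg_left (ih x) hl]

/-- walk killed at `z` -/
noncomputable def kill (Pb : Matrix V V ℝ) (z : V) : Matrix V V ℝ :=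
  fun x y => if x = z ∨ y = z then 0 else Pb x y

lemma cover_bound (Pb : Matrix V V ℝ) (hP : ∀ x y, 0 ≤ Pb x y) (m : ℕ) (hm : 0 < m)
    (g f : V → Fin m) (x : V) (t : ℕ) (W : Finset V) (y : V) :
    (Pb ^ t) x y - ∑ z ∈ Wᶜ, (kill Pb z ^ t) x y ≤
      ((lampChain Pb m) ^ t).mulVec
        (fun q => (if q.2 = y then 1 else 0) * Phi m g W q.1) (f, x) := by
  induction t generalizing W y with
  | zero =>
    simp only [pow_zero, Matrix.one_mulVec, Matrix.one_apply]
    by_cases hxy : x = y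
    · simp only [hxy, if_true, Finset.sum_const, one_mul]
      by_cases hW : Wᶜ = ∅
      · have : W = Finset.univ := by simpa using hW
        simp [this, Phi]
      · have : 1 ≤ Wᶜ.card := Finset.card_pos.mpr (Finset.nonempty_iff_ne_empty.mpr hW)
        have h1 : (1:ℝ) ≤ (Wᶜ.card : ℝ) := by exact_mod_cast this
        have := Phi_nonneg m g W f
        simp only [nsmul_eq_mul, mul_one]
        linarith
    · simp [hxy]
  | succ t ih =>
    rw [pow_succ (lampChain Pb m), ← Matrix.mulVec_mulVec]
    rw [lamp_stepV Pb m hm g W (fun x => if x = y then 1 else 0)]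
    have e : (fun p : (V → Fin m) × V => ∑ x', Pb p.2 x' * (if x' = y then 1 else 0) *
        Phi m g (W ∪ {p.2, x'}) p.1) =
        fun p => ∑ u, Pb u y * ((if p.2 = u then 1 else 0) * Phi m g (W ∪ {u, y}) p.1) := by
      funext p
      simp
    rw [e]
    have e2 : ((lampChain Pb m) ^ t).mulVec (fun p => ∑ u, Pb u y *
        ((if p.2 = u then 1 else 0) * Phi m g (W ∪ {u, y}) p.1)) (f, x) =
        ∑ u, Pb u y * ((lampChain Pb m) ^ t).mulVec (fun p =>
        ((if p.2 = u then 1 else 0) * Phi m g (W ∪ {u, y}) p.1)) (f, x) := by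
      simp only [Matrix.mulVec, dotProduct, Finset.mul_sum]
      rw [Finset.sum_comm]
      refine Finset.sum_congr rfl fun u _ => Finset.sum_congr rfl fun q _ => by ring
    rw [e2]
    refine le_trans (le_of_eq ?_) (Finset.sum_le_sum fun u _ =>
      mul_le_mul_of_nonneg_left (ih (W ∪ {u, y}) u) (hP u y))
    simp only [pow_succ, Matrix.mul_apply, mul_sub, Finset.sum_sub_distrib]
    congr 1
    · exact Finset.sum_congr rfl fun _ _ => mul_comm _ _
    · rw [Finset.sum_comm]
      refine Finset.sum_congr rfl fun u _ => ?_
      rw [Finset.mul_sum, ← Finset.sum_filter_add_sum_filter_not Wᶜ (fun z => z ∈ ({u, y} : Finset V))]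
      rw [Finset.sum_eq_zero, zero_add]
      · apply Finset.sum_congr
        · ext z; simp; tauto
        · intro z hz
          simp only [Finset.mem_compl, Finset.mem_union, Finset.mem_insert, Finset.mem_singleton,
            not_or] at hz
          have : ¬ (u = z ∨ y = z) := by
            rintro (h | h)
            · exact hz.2.1 h.symm
            · exact hz.2.2 h.symm
          simp only [kill, this, if_false]
          ring
      · intro z hz
        simp only [Finset.mem_filter, Finset.mem_insert, Finset.mem_singleton] at hz
        have : (u = z ∨ y = z) := by
          rcases hz.2 with h | h
          · exact Or.inl h.symm
          · exact Or.inr h.symm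
        simp [kill, this]

/-- entropy upper bound -/
lemma relEnt_upper (μ : Y → ℝ) (h0 : ∀ y, 0 ≤ μ y) (h1 : ∑ y, μ y = 1) (s : ℝ) (hs : 0 ≤ s)
    (N : ℝ) (hN : N = Fintype.card Y) (hN1 : 1 ≤ N)
    (hlow : ∀ y, (1 - s) * N⁻¹ ≤ μ y) : relEnt μ (unif Y) ≤ s * (Real.log N + 1) := by
  have hNpos : 0 < N := by linarith
  have hlogN : 0 ≤ Real.log N := Real.log_nonneg hN1
  have key : ∀ y, μ y * Real.log (μ y / unif Y y) ≤ (μ y - (1 - s) * N⁻¹) * (Real.log N + 1) := by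
    intro y
    have hu : μ y / unif Y y = μ y * N := by simp [unif, hN]
    rw [hu]
    have hμ1 : μ y ≤ 1 := by
      rw [← h1]; exact Finset.single_le_sum (fun i _ => h0 i) (Finset.mem_univ y)
    have hrhs : 0 ≤ (μ y - (1 - s) * N⁻¹) * (Real.log N + 1) :=
      mul_nonneg (by linarith [hlow y]) (by linarith)
    by_cases hr : μ y * N ≤ 1
    · refine le_trans ?_ hrhs
      exact mul_nonpos_of_nonneg_of_nonpos (h0 y)
        (Real.log_nonpos (mul_nonneg (h0 y) hNpos.le) hr)
    · push Not at hr
      set r := μ y * N with hrdef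
      have hμ : μ y = r * N⁻¹ := by rw [hrdef]; field_simp
      have l1 : Real.log r ≤ Real.log N := Real.log_le_log (by linarith) (by nlinarith)
      have l2 : Real.log r ≤ r - 1 := Real.log_le_sub_one_of_pos (by linarith)
      rw [hμ]
      have : r * Real.log r ≤ (r - (1 - s)) * (Real.log N + 1) := by
        nlinarith [mul_le_mul_of_nonneg_left l1 (by linarith : 0 ≤ r - 1)]
      have hi : 0 ≤ N⁻¹ := by positivity
      nlinarith [mul_le_mul_of_nonneg_left this hi]
  unfold relEnt
  refine (Finset.sum_le_sum fun y _ => key y).trans ?_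
  rw [← Finset.sum_mul, Finset.sum_sub_distrib, h1]
  simp only [Finset.sum_const, Finset.card_univ, nsmul_eq_mul]
  rw [← hN]
  have : 1 - N * ((1 - s) * N⁻¹) = s := by field_simp; ring
  rw [this]

/-- entropy lower bound -/
lemma relEnt_lower (μ : Y → ℝ) (h0 : ∀ y, 0 ≤ μ y) (h1 : ∑ y, μ y = 1) [Nonempty Y]
    (w : Y → ℝ) (hw : ∀ y, 0 < w y) :
    ∑ y, μ y * Real.log (w y) + 1 - ∑ y, unif Y y * w y ≤ relEnt μ (unif Y) := by
  have hc : (0:ℝ) < Fintype.card Y := by exact_mod_cast Fintype.card_pos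
  have hu : ∀ y, 0 < unif Y y := fun y => by unfold unif; positivity
  have key : ∀ y, μ y * Real.log (w y) + μ y - unif Y y * w y ≤
      μ y * Real.log (μ y / unif Y y) := by
    intro y
    rcases (h0 y).eq_or_lt with h | h
    · rw [← h]; simp; exact mul_nonneg (hu y).le (hw y).le
    · have a := Real.one_sub_inv_le_log_of_pos (x := μ y / unif Y y / w y)
        (by have := hu y; have := hw y; positivity)
      rw [Real.log_div (by have := hu y; positivity) (hw y).ne'] at a
      have b := mul_le_mul_of_nonneg_left a h.le
      have c : μ y * (1 - (μ y / unif Y y / w y)⁻¹) = μ y - unif Y y * w y := by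
        have := (hu y).ne'; have := (hw y).ne'; field_simp
      rw [c] at b
      linarith
  unfold relEnt
  have := Finset.sum_le_sum fun y (_ : y ∈ Finset.univ) => key y
  rw [Finset.sum_sub_distrib, Finset.sum_add_distrib, h1] at this
  exact this

end Helpers

section Cycle

set_option linter.unusedSectionVars false

variable (n : ℕ) [NeZero n]

lemma cyc_nonneg (x y : ZMod n) : 0 ≤ cycleWalk n x y := by
  unfold cycleWalk
  have : ∀ (p : Prop) [Decidable p] (a : ℝ), 0 ≤ a → 0 ≤ if p then a else 0 := by
    intro p _ a ha; split_ifs <;> linarith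
  have h1 := this (y = x) (1/2) (by norm_num)
  have h2 := this (y = x + 1) (1/4) (by norm_num)
  have h3 := this (y = x - 1) (1/4) (by norm_num)
  linarith

lemma cyc_mulVec (a : ZMod n → ℝ) (x : ZMod n) :
    ∑ y, cycleWalk n x y * a y = a x / 2 + a (x + 1) / 4 + a (x - 1) / 4 := by
  simp only [cycleWalk, add_mul, ite_mul, zero_mul, Finset.sum_add_distrib, Finset.sum_ite_eq',
    Finset.mem_univ, if_true]
  ring

lemma cyc_row (x : ZMod n) : ∑ y, cycleWalk n x y = 1 := by
  have := cyc_mulVec n (fun _ => 1) x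
  simp only [mul_one] at this
  rw [this]; norm_num

lemma cyc_col (y : ZMod n) : ∑ x, cycleWalk n x y = 1 := by
  have h1 : ∀ x : ZMod n, (y = x + 1) ↔ (x = y - 1) := fun x =>
    ⟨fun h => by rw [h]; ring, fun h => by rw [h]; ring⟩
  have h2 : ∀ x : ZMod n, (y = x - 1) ↔ (x = y + 1) := fun x =>
    ⟨fun h => by rw [h]; ring, fun h => by rw [h]; ring⟩
  simp only [cycleWalk, h1, h2, Finset.sum_add_distrib, Finset.sum_ite_eq, Finset.sum_ite_eq',
    Finset.mem_univ, if_true]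
  norm_num

noncomputable def GG (x : ZMod n) : ℝ := (x.val : ℝ) * ((n : ℝ) - x.val)

lemma GG_cast (k : ℕ) (hk : k ≤ n) : GG n (k : ZMod n) = (k : ℝ) * ((n : ℝ) - k) := by
  unfold GG
  rcases hk.lt_or_eq with h | h
  · rw [ZMod.val_natCast_of_lt h]
  · subst h; simp

lemma GG_nonneg (x : ZMod n) : 0 ≤ GG n x := by
  unfold GG
  have : (x.val : ℝ) ≤ n := by exact_mod_cast (ZMod.val_lt x).le
  exact mul_nonneg (by positivity) (by linarith)

lemma GG_le (x : ZMod n) : GG n x ≤ (n : ℝ) ^ 2 / 4 := by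
  unfold GG
  nlinarith [sq_nonneg ((x.val : ℝ) * 2 - n)]

lemma GG_one_le (x : ZMod n) (hx : x ≠ 0) : 1 ≤ GG n x := by
  unfold GG
  have h1 : (x.val : ℝ) + 1 ≤ n := by exact_mod_cast (ZMod.val_lt x)
  have h2 : (1:ℝ) ≤ x.val := by
    exact_mod_cast Nat.one_le_iff_ne_zero.mpr ((ZMod.val_ne_zero x).mpr hx)
  nlinarith

lemma GG_lap (x : ZMod n) (hx : x ≠ 0) : GG n (x + 1) + GG n (x - 1) = 2 * GG n x - 2 := by
  have h1 := ZMod.val_lt x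
  have h2 : 1 ≤ x.val := Nat.one_le_iff_ne_zero.mpr ((ZMod.val_ne_zero x).mpr hx)
  obtain ⟨k, hk⟩ : ∃ k, x.val = k + 1 := ⟨x.val - 1, by omega⟩
  have hx' : x = ((k + 1 : ℕ) : ZMod n) := by rw [← hk]; simp
  have e1 : x + 1 = ((k + 2 : ℕ) : ZMod n) := by rw [hx']; push_cast; ring
  have e2 : x - 1 = ((k : ℕ) : ZMod n) := by rw [hx']; push_cast; ring
  rw [e1, e2, hx', GG_cast n _ (by omega), GG_cast n _ (by omega), GG_cast n _ (by omega)]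
  push_cast
  ring

noncomputable def ll : ℝ := 1 - 1 / (4 * (n : ℝ) ^ 2)

lemma n_pos : (1:ℝ) ≤ n := by exact_mod_cast Nat.one_le_iff_ne_zero.mpr (NeZero.ne n)

lemma ll_nonneg : 0 ≤ ll n := by
  have := n_pos n
  unfold ll
  have : 1 / (4 * (n : ℝ) ^ 2) ≤ 1 := by
    rw [div_le_one (by positivity)]; nlinarith
  linarith

lemma ll_mul (h c : ℝ) (hc : h ≤ c * n ^ 2) : h - c / 4 ≤ ll n * h := by
  have := n_pos n
  have e : ll n * h = h - h / (4 * (n:ℝ)^2) := by unfold ll; ring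
  rw [e]
  have : h / (4 * (n:ℝ)^2) ≤ c / 4 := by
    rw [div_le_div_iff₀ (by positivity) (by norm_num)]; nlinarith
  linarith

lemma kill_bound (z x y : ZMod n) (t : ℕ) : (kill (cycleWalk n) z ^ t) x y ≤ 2 * ll n ^ t := by
  have hn := n_pos n
  have hK : ∀ x y, 0 ≤ kill (cycleWalk n) z x y := by
    intro x y; unfold kill; split_ifs
    · exact le_rfl
    · exact cyc_nonneg n x y
  set h : ZMod n → ℝ := fun x => GG n (x - z) + (n:ℝ)^2 with hh
  have h0 : ∀ x, (n:ℝ)^2 ≤ h x := fun x => by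
    have := GG_nonneg n (x - z); simp only [hh]; linarith
  have h1 : ∀ x, h x ≤ 5 / 4 * (n:ℝ)^2 := fun x => by
    have := GG_le n (x - z); simp only [hh]; linarith
  have hpos : ∀ x, 0 ≤ h x := fun x => le_trans (by positivity) (h0 x)
  have step : ∀ x, (kill (cycleWalk n) z).mulVec h x ≤ ll n * h x := by
    intro x
    simp only [Matrix.mulVec, dotProduct]
    by_cases hx : x = z
    · simp only [kill, hx, true_or, if_true, zero_mul, Finset.sum_const_zero]
      exact mul_nonneg (ll_nonneg n) (hpos _)
    · have l1 : ∑ y, kill (cycleWalk n) z x y * h y ≤ ∑ y, cycleWalk n x y * h y := by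
        refine Finset.sum_le_sum fun y _ => mul_le_mul_of_nonneg_right ?_ (hpos y)
        unfold kill; split_ifs
        · exact cyc_nonneg n x y
        · exact le_rfl
      rw [cyc_mulVec] at l1
      have l2 := GG_lap n (x - z) (sub_ne_zero.mpr hx)
      have e1 : x + 1 - z = x - z + 1 := by ring
      have e2 : x - 1 - z = x - z - 1 := by ring
      have l3 := ll_mul n (h x) (5/4) (h1 x)
      simp only [hh, e1, e2] at l1 l3 ⊢
      linarith
  have main := pow_super _ hK h (ll n) (ll_nonneg n) step t x
  have l4 : (kill (cycleWalk n) z ^ t) x y * h y ≤ (kill (cycleWalk n) z ^ t).mulVec h x := by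
    simp only [Matrix.mulVec, dotProduct]
    exact Finset.single_le_sum (f := fun y => (kill (cycleWalk n) z ^ t) x y * h y)
      (fun i _ => mul_nonneg (pow_nonneg' _ hK t x i) (hpos i)) (Finset.mem_univ y)
  have l5 : 0 ≤ (kill (cycleWalk n) z ^ t) x y := pow_nonneg' _ hK t x y
  have l6 : 0 ≤ ll n ^ t := pow_nonneg (ll_nonneg n) t
  have n2 : (0:ℝ) < (n:ℝ)^2 := by positivity
  have l7 : (kill (cycleWalk n) z ^ t) x y * (n:ℝ)^2 ≤ 2 * ll n ^ t * (n:ℝ)^2 := by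
    calc _ ≤ (kill (cycleWalk n) z ^ t) x y * h y := mul_le_mul_of_nonneg_left (h0 y) l5
      _ ≤ ll n ^ t * h x := l4.trans main
      _ ≤ ll n ^ t * (5 / 4 * (n:ℝ)^2) := mul_le_mul_of_nonneg_left (h1 x) l6
      _ ≤ _ := by nlinarith [mul_nonneg l6 n2.le]
  exact le_of_mul_le_mul_right l7 n2

lemma couple (y : ZMod n) (t : ℕ) (x x' : ZMod n) :
    (cycleWalk n ^ t) x y - (cycleWalk n ^ t) x' y ≤ ll n ^ t * GG n (x - x') := by
  induction t generalizing x x' with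
  | zero =>
    simp only [pow_zero, one_mul, Matrix.one_apply]
    by_cases h : x = x'
    · subst h; simp [GG]
    · have := GG_one_le n (x - x') (sub_ne_zero.mpr h)
      split_ifs <;> linarith
  | succ t ih =>
    by_cases h : x = x'
    · subst h; simp [GG]
    · rw [pow_succ' (cycleWalk n), Matrix.mul_apply, Matrix.mul_apply, cyc_mulVec n (fun u => (cycleWalk n ^ t) u y),
        cyc_mulVec n (fun u => (cycleWalk n ^ t) u y)]
      have a1 := ih (x + 1) x'
      have a2 := ih (x - 1) x'
      have a3 := ih x (x' + 1)
      have a4 := ih x (x' - 1)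
      have e1 : x + 1 - x' = x - x' + 1 := by ring
      have e2 : x - 1 - x' = x - x' - 1 := by ring
      have e3 : x - (x' + 1) = x - x' - 1 := by ring
      have e4 : x - (x' - 1) = x - x' + 1 := by ring
      rw [e1] at a1; rw [e2] at a2; rw [e3] at a3; rw [e4] at a4
      have l2 := GG_lap n (x - x') (sub_ne_zero.mpr h)
      have l3 := ll_mul n (GG n (x - x')) (1/4) (by linarith [GG_le n (x - x')])
      have l6 : 0 ≤ ll n ^ t := pow_nonneg (ll_nonneg n) t
      have : (cycleWalk n ^ t) x y / 2 + (cycleWalk n ^ t) (x+1) y / 4 + (cycleWalk n ^ t) (x-1) y / 4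
        - ((cycleWalk n ^ t) x' y / 2 + (cycleWalk n ^ t) (x'+1) y / 4 + (cycleWalk n ^ t) (x'-1) y / 4)
        ≤ ll n ^ t * ((GG n (x - x' + 1) + GG n (x - x' - 1)) / 2) := by linarith
      refine this.trans ?_
      rw [pow_succ, mul_assoc]
      refine mul_le_mul_of_nonneg_left ?_ l6
      linarith

lemma cyc_low (x y : ZMod n) (t : ℕ) : (n:ℝ)⁻¹ - (n:ℝ)^2 * ll n ^ t ≤ (cycleWalk n ^ t) x y := by
  have hn := n_pos n
  have l6 : 0 ≤ ll n ^ t := pow_nonneg (ll_nonneg n) t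
  have h : ∀ x', (cycleWalk n ^ t) x' y ≤ (cycleWalk n ^ t) x y + (n:ℝ)^2 * ll n ^ t := by
    intro x'
    have := couple n y t x' x
    have h2 : ll n ^ t * GG n (x' - x) ≤ ll n ^ t * (n:ℝ)^2 :=
      mul_le_mul_of_nonneg_left (by have := GG_le n (x' - x); nlinarith) l6
    linarith
  have h3 := Finset.sum_le_sum fun x' (_ : x' ∈ Finset.univ) => h x'
  rw [pow_sum_col _ (cyc_col n)] at h3
  simp only [Finset.sum_const, Finset.card_univ, nsmul_eq_mul, ZMod.card] at h3
  have h4 : (n:ℝ)⁻¹ ≤ (cycleWalk n ^ t) x y + (n:ℝ)^2 * ll n ^ t := by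
    rw [inv_le_iff_one_le_mul₀ (by linarith)]; linarith
  linarith

lemma lamp_low (m : ℕ) (hn2 : 2 ≤ n) (hm : 0 < m) (p q : (ZMod n → Fin m) × ZMod n) (t : ℕ) :
    (1 - 2 * (n:ℝ)^3 * ll n ^ t) * ((n:ℝ) * (m:ℝ)^n)⁻¹ ≤ (lampChain (cycleWalk n) m ^ t) p q := by
  obtain ⟨f, x⟩ := p
  obtain ⟨g, y⟩ := q
  have hn := n_pos n
  have hn2' : (2:ℝ) ≤ n := by exact_mod_cast hn2
  have hm' : (0:ℝ) < (m:ℝ)^n := by positivity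
  have l6 : 0 ≤ ll n ^ t := pow_nonneg (ll_nonneg n) t
  have c := cover_bound (cycleWalk n) (cyc_nonneg n) m hm g f x t ∅ y
  have e : (lampChain (cycleWalk n) m ^ t).mulVec
      (fun q => (if q.2 = y then 1 else 0) * Phi m g ∅ q.1) (f, x) =
      (lampChain (cycleWalk n) m ^ t) (f, x) (g, y) * (m:ℝ)^n := by
    simp only [Matrix.mulVec, dotProduct]
    rw [Finset.sum_eq_single (g, y)]
    · simp [Phi_eq, ZMod.card]
    · rintro ⟨g', y'⟩ _ hne
      by_cases h1 : y' = y
      · have : ¬ ∀ z, g' z = g z := fun h => hne (by rw [h1, funext h])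
        simp [Phi_eq, this]
      · simp [h1]
    · simp
  rw [e] at c
  have c2 : ∑ z ∈ (∅ : Finset (ZMod n))ᶜ, (kill (cycleWalk n) z ^ t) x y ≤ n * (2 * ll n ^ t) := by
    refine (Finset.sum_le_sum fun z _ => kill_bound n z x y t).trans ?_
    simp [ZMod.card]
  have c3 := cyc_low n x y t
  have c4 : (n:ℝ)⁻¹ - 2 * (n:ℝ)^2 * ll n ^ t ≤
      (lampChain (cycleWalk n) m ^ t) (f, x) (g, y) * (m:ℝ)^n := by
    have : n * (2 * ll n ^ t) ≤ (n:ℝ)^2 * ll n ^ t := by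
      nlinarith [mul_le_mul_of_nonneg_right hn2' (by positivity : 0 ≤ (n:ℝ) * ll n ^ t)]
    linarith
  have e5 : (1 - 2 * (n:ℝ)^3 * ll n ^ t) * ((n:ℝ) * (m:ℝ)^n)⁻¹ =
    ((n:ℝ)⁻¹ - 2 * (n:ℝ)^2 * ll n ^ t) / (m:ℝ)^n := by
    field_simp
  rw [e5, div_le_iff₀ hm']
  exact c4

lemma ent_upper (m : ℕ) (hn2 : 2 ≤ n) (hm : 2 ≤ m) (p : (ZMod n → Fin m) × ZMod n) (t : ℕ)
    (ht : 72 * (n:ℝ)^2 * Real.log (n * Real.log m) ≤ t) :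
    relEnt ((lampChain (cycleWalk n) m ^ t) p) (unif ((ZMod n → Fin m) × ZMod n)) ≤
      (Real.exp 1)⁻¹ := by
  have hn := n_pos n
  have hn2' : (2:ℝ) ≤ n := by exact_mod_cast hn2
  have hm0 : 0 < m := by omega
  have hm2 : (2:ℝ) ≤ m := by exact_mod_cast hm
  have l6 : 0 ≤ ll n ^ t := pow_nonneg (ll_nonneg n) t
  have hN1 : (1:ℝ) ≤ (n:ℝ) * (m:ℝ)^n := by
    have : (1:ℝ) ≤ (m:ℝ)^n := one_le_pow₀ (by linarith)
    nlinarith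
  have h := relEnt_upper ((lampChain (cycleWalk n) m ^ t) p)
    (fun y => pow_nonneg' _ (lamp_nonneg _ (cyc_nonneg n) m) t p y)
    (pow_sum _ (lamp_sum _ (cyc_row n) m hm0) t p)
    (2 * (n:ℝ)^3 * ll n ^ t) (by positivity) ((n:ℝ) * (m:ℝ)^n) (by simp [ZMod.card, mul_comm]) hN1
    (fun y => lamp_low n m hn2 hm0 p y t)
  refine h.trans ?_
  have hlm : Real.log 2 ≤ Real.log m := Real.log_le_log (by norm_num) hm2
  have hl2 := Real.log_two_gt_d9
  set M := (n:ℝ) * Real.log m with hM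
  have hM1 : (1.386:ℝ) ≤ M := by nlinarith
  have hnM : (n:ℝ) ≤ 1.5 * M := by nlinarith
  have e1 : Real.log ((n:ℝ) * (m:ℝ)^n) + 1 ≤ 2.5 * M := by
    rw [Real.log_mul (by positivity) (by positivity), Real.log_pow]
    have := Real.log_le_sub_one_of_pos (by linarith : (0:ℝ) < n)
    linarith
  have e2 : ll n ^ t ≤ (M ^ 18)⁻¹ := by
    have : ll n ≤ Real.exp (-(1 / (4 * (n:ℝ)^2))) := by
      have := Real.add_one_le_exp (-(1 / (4 * (n:ℝ)^2)))
      unfold ll; linarith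
    refine (pow_le_pow_left₀ (ll_nonneg n) this t).trans ?_
    rw [← Real.exp_nat_mul, ← Real.exp_log (by positivity : 0 < (M^18)⁻¹), Real.log_inv, Real.log_pow]
    apply Real.exp_le_exp.mpr
    have : 18 * Real.log M ≤ t * (1 / (4 * (n:ℝ)^2)) := by
      rw [mul_one_div, le_div_iff₀ (by positivity)]; linarith
    push_cast
    linarith
  have hMp : 0 < M := by linarith
  have e3 : 2 * (n:ℝ)^3 ≤ 6.75 * M^3 := by
    have := pow_le_pow_left₀ (by linarith) hnM 3
    nlinarith
  have e4 : (50:ℝ) ≤ M ^ 14 := by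
    have := pow_le_pow_left₀ (by norm_num) hM1 14
    refine le_trans ?_ this
    norm_num
  have he := Real.exp_one_lt_d9
  calc 2 * (n:ℝ)^3 * ll n ^ t * (Real.log ((n:ℝ) * (m:ℝ)^n) + 1)
      ≤ 6.75 * M^3 * (M^18)⁻¹ * (2.5 * M) := by
        apply mul_le_mul _ e1 _ (by positivity)
        · exact mul_le_mul e3 e2 l6 (by positivity)
        · have := Real.log_nonneg hN1; linarith
    _ = 16.875 / M ^ 14 := by field_simp; norm_num
    _ ≤ (Real.exp 1)⁻¹ := by
        rw [div_le_iff₀ (by positivity), inv_mul_eq_div, le_div_iff₀ (Real.exp_pos 1)]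
        nlinarith

end Cycle

section Lower

variable (n : ℕ) [NeZero n]

noncomputable def cc (x : ZMod n) : ℝ := Real.cos (2 * Real.pi * x.val / n)

lemma cc_cast (k : ℤ) : cc n (k : ZMod n) = Real.cos (2 * Real.pi * k / n) := by
  have hn := n_pos n
  unfold cc
  have h : (((k : ZMod n).val : ℤ) : ℝ) = (k : ℝ) - n * ((k / n : ℤ) : ℝ) := by
    rw [ZMod.val_intCast, Int.emod_def]; push_cast; ring
  have h' : (((k : ZMod n).val : ℕ) : ℝ) = (k : ℝ) - n * ((k / n : ℤ) : ℝ) := by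
    rw [← h]; norm_cast
  rw [h']
  have : 2 * Real.pi * ((k : ℝ) - n * ((k / n : ℤ) : ℝ)) / n =
      2 * Real.pi * k / n - ((k / n : ℤ) : ℝ) * (2 * Real.pi) := by
    field_simp
  rw [this, Real.cos_sub_int_mul_two_pi]

lemma cc_lap (x : ZMod n) : cc n (x + 1) + cc n (x - 1) = 2 * Real.cos (2 * Real.pi / n) * cc n x := by
  have hx : x = (((x.val : ℤ)) : ZMod n) := by simp
  have e1 : x + 1 = ((((x.val : ℤ) + 1 : ℤ)) : ZMod n) := by simp
  have e2 : x - 1 = ((((x.val : ℤ) - 1 : ℤ)) : ZMod n) := by simp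
  rw [e1, e2, cc_cast, cc_cast]
  unfold cc
  push_cast
  have a1 : 2 * Real.pi * ((x.val : ℝ) + 1) / n = 2 * Real.pi * x.val / n + 2 * Real.pi / n := by ring
  have a2 : 2 * Real.pi * ((x.val : ℝ) - 1) / n = 2 * Real.pi * x.val / n - 2 * Real.pi / n := by ring
  rw [a1, a2, Real.cos_add, Real.cos_sub]
  ring

noncomputable def ee : ℝ := Real.exp (-(20 / (n:ℝ)^2))

noncomputable def hp (x : ZMod n) : ℝ := max (cc n x) 0

lemma hp_sub (x : ZMod n) : ee n * hp n x ≤ hp n x / 2 + hp n (x + 1) / 4 + hp n (x - 1) / 4 := by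
  have hn := n_pos n
  have p0 : ∀ x, 0 ≤ hp n x := fun x => le_max_right _ _
  have p1 : ∀ x, cc n x ≤ hp n x := fun x => le_max_left _ _
  have q1 := p0 (x + 1)
  have q2 := p0 (x - 1)
  have q3 := p1 (x + 1)
  have q4 := p1 (x - 1)
  rcases le_total (cc n x) 0 with h | h
  · have : hp n x = 0 := max_eq_right h
    rw [this]; linarith
  · have e : hp n x = cc n x := max_eq_left h
    rw [e]
    have hu : 20 / (n:ℝ)^2 = 2 * (10 / (n:ℝ)^2) := by ring
    set u := 10 / (n:ℝ)^2 with hudef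
    have hup : 0 ≤ u := by positivity
    rcases le_total u (1/2) with h2 | h2
    · have c1 := Real.one_sub_sq_div_two_le_cos (x := 2 * Real.pi / n)
      have c2 : (2 * Real.pi / n)^2 / 2 ≤ 2 * u := by
        have hpi : Real.pi ^ 2 ≤ 10 := by
          have := Real.pi_lt_d2; have := Real.pi_pos; nlinarith
        have : (2 * Real.pi / n)^2 / 2 = 2 * (Real.pi^2 / (n:ℝ)^2) := by ring
        rw [this, hudef]
        gcongr
      have c3 : ee n ≤ 1 - u := by
        unfold ee
        rw [hu, Real.exp_neg, inv_le_iff_one_le_mul₀ (Real.exp_pos _)]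
        have := Real.add_one_le_exp (2 * u)
        nlinarith
      have c4 := cc_lap n x
      have c5 : ee n * cc n x ≤ (1 - u) * cc n x := mul_le_mul_of_nonneg_right c3 h
      have c6 : (1 - 2 * u) * cc n x ≤ Real.cos (2 * Real.pi / n) * cc n x :=
        mul_le_mul_of_nonneg_right (by linarith) h
      linarith
    · have c3 : ee n ≤ 1 / 2 := by
        unfold ee
        rw [hu, Real.exp_neg, inv_le_iff_one_le_mul₀ (Real.exp_pos _)]
        have := Real.add_one_le_exp (2 * u)
        linarith
      nlinarith [mul_le_mul_of_nonneg_right c3 h]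

noncomputable def WW : Finset (ZMod n) := Finset.univ.filter fun x => 0 < cc n x

lemma card_WWc (hn2 : 2 ≤ n) : (n:ℝ) / 4 ≤ ((WW n)ᶜ.card : ℝ) := by
  have hn : 0 < n := Nat.pos_of_ne_zero (NeZero.ne n)
  have hnr := n_pos n
  have hpi := Real.pi_pos
  have h : (Finset.Ico ((n + 3) / 4) (3 * n / 4 + 1)).card ≤ (WW n)ᶜ.card ∨ n ≤ 1 := by
    by_cases h1 : n ≤ 1
    · exact Or.inr h1
    left
    apply Finset.card_le_card_of_injOn (fun k : ℕ => (k : ZMod n))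
    · intro k hk
      simp only [Finset.coe_Ico, Set.mem_Ico] at hk
      have hkn : k < n := by omega
      have a1 : (n:ℝ) ≤ 4 * k := by exact_mod_cast (by omega : n ≤ 4 * k)
      have a2 : 4 * (k:ℝ) ≤ 3 * n := by exact_mod_cast (by omega : 4 * k ≤ 3 * n)
      simp only [WW, Finset.coe_compl, Set.mem_compl_iff, Finset.mem_coe, Finset.mem_filter,
        Finset.mem_univ, true_and, not_lt]
      unfold cc
      rw [ZMod.val_natCast_of_lt hkn]
      apply Real.cos_nonpos_of_pi_div_two_le_of_le
      · rw [le_div_iff₀ (by linarith)]; nlinarith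
      · rw [div_le_iff₀ (by linarith)]; nlinarith
    · intro a ha b hb hab
      simp only [Finset.coe_Ico, Set.mem_Ico] at ha hb
      have := congrArg ZMod.val hab
      simp only at this
      rwa [ZMod.val_natCast_of_lt (by omega), ZMod.val_natCast_of_lt (by omega)] at this
  rcases h with h | h
  · rw [Nat.card_Ico] at h
    have : n ≤ 4 * (WW n)ᶜ.card := by omega
    have : (n:ℝ) ≤ 4 * ((WW n)ᶜ.card : ℝ) := by exact_mod_cast this
    linarith
  · omega

lemma sum_Phi (m : ℕ) (hm : 0 < m) (g : ZMod n → Fin m) (W : Finset (ZMod n)) :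
    ∑ f, Phi m g W f = (m:ℝ)^n := by
  simp only [Phi]
  have := Finset.prod_univ_sum (fun _ : ZMod n => (Finset.univ : Finset (Fin m)))
    (fun z a => (if z ∈ W then (1:ℝ) else (if a = g z then (m : ℝ) else 0)))
  rw [Fintype.piFinset_univ] at this
  rw [← this]
  have h : ∀ z ∈ (Finset.univ : Finset (ZMod n)),
      ∑ a, (if z ∈ W then (1:ℝ) else (if a = g z then (m : ℝ) else 0)) = m := by
    intro z _
    by_cases hz : z ∈ W <;> simp [hz]
  rw [Finset.prod_congr rfl h]
  simp [ZMod.card]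

lemma ent_lower (m : ℕ) (hm : 2 ≤ m) (g : ZMod n → Fin m) (t : ℕ) :
    ee n ^ t * ((WW n)ᶜ.card * Real.log m) - 1 ≤
    relEnt ((lampChain (cycleWalk n) m ^ t) (g, 0)) (unif ((ZMod n → Fin m) × ZMod n)) := by
  have hn := n_pos n
  have hm0 : 0 < m := by omega
  have hm1 : (1:ℝ) ≤ m := by exact_mod_cast hm0
  haveI : Nonempty ((ZMod n → Fin m) × ZMod n) := ⟨(g, 0)⟩
  set P := lampChain (cycleWalk n) m with hP
  have hP0 : ∀ p q, 0 ≤ P p q := lamp_nonneg _ (cyc_nonneg n) m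
  have p0 : ∀ x, 0 ≤ hp n x := fun x => le_max_right _ _
  have hp1 : ∀ x, hp n x ≤ 1 := fun x => max_le (Real.cos_le_one _) (by norm_num)
  have hpW : ∀ x, x ∉ WW n → hp n x = 0 := by
    intro x hx
    simp only [WW, Finset.mem_filter, Finset.mem_univ, true_and, not_lt] at hx
    exact max_eq_right hx
  have hsub := pow_sub P hP0 (fun q => hp n q.2 * Phi m g (WW n) q.1) (ee n) (Real.exp_pos _).le
    (by
      rintro ⟨f, x⟩
      rw [hP, lamp_stepV _ m hm0]
      simp only
      by_cases hx : x ∈ WW n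
      · have : ∀ x' ∈ (Finset.univ : Finset (ZMod n)),
            cycleWalk n x x' * hp n x' * Phi m g (WW n ∪ {x, x'}) f =
            cycleWalk n x x' * hp n x' * Phi m g (WW n) f := by
          intro x' _
          by_cases hx' : x' ∈ WW n
          · have : WW n ∪ {x, x'} = WW n := by
              apply Finset.union_eq_left.mpr
              intro z hz
              simp only [Finset.mem_insert, Finset.mem_singleton] at hz
              rcases hz with h | h <;> rw [h] <;> assumption
            rw [this]
          · simp [hpW x' hx']
        rw [Finset.sum_congr rfl this, ← Finset.sum_mul, cyc_mulVec, ← mul_assoc]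
        exact mul_le_mul_of_nonneg_right (hp_sub n x) (Phi_nonneg _ _ _ _)
      · rw [hpW x hx]
        simp only [zero_mul, mul_zero]
        exact Finset.sum_nonneg fun x' _ => mul_nonneg (mul_nonneg (cyc_nonneg n _ _) (p0 _))
          (Phi_nonneg _ _ _ _)) t (g, 0)
  set Q : ℝ := (m:ℝ)^((WW n)ᶜ.card) with hQ
  have hQ1 : 1 ≤ Q := one_le_pow₀ hm1
  have hPhig : Phi m g (WW n) g = Q := by rw [Phi_eq]; simp [hQ]
  have hh0 : hp n 0 = 1 := by simp [hp, cc]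
  simp only [hPhig, hh0, one_mul] at hsub
  have hrel := relEnt_lower ((P ^ t) (g, 0)) (fun y => pow_nonneg' _ hP0 t _ y)
    (pow_sum _ (lamp_sum _ (cyc_row n) m hm0) t _) (fun q => 1 + Phi m g (WW n) q.1)
    (fun q => by have := Phi_nonneg m g (WW n) q.1; linarith)
  have hs : ∑ q : (ZMod n → Fin m) × ZMod n, unif ((ZMod n → Fin m) × ZMod n) q *
      (1 + Phi m g (WW n) q.1) = 2 := by
    simp only [unif]
    rw [← Finset.mul_sum, Finset.sum_add_distrib, Fintype.sum_prod_type (f := fun q : (ZMod n → Fin m) × ZMod n => Phi m g (WW n) q.1)]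
    simp only [Finset.sum_const, Finset.card_univ, nsmul_eq_mul, ← Finset.mul_sum, sum_Phi n m hm0]
    simp only [Fintype.card_prod, Fintype.card_fun, Fintype.card_fin, ZMod.card]
    push_cast
    have : (0:ℝ) < (m:ℝ)^n := by positivity
    field_simp
    norm_num
  rw [hs] at hrel
  have hlog : ∑ q, (P ^ t) (g, 0) q * (hp n q.2 * Phi m g (WW n) q.1 * (Real.log Q / Q)) ≤
      ∑ q, (P ^ t) (g, 0) q * Real.log (1 + Phi m g (WW n) q.1) := by
    refine Finset.sum_le_sum fun q _ => mul_le_mul_of_nonneg_left ?_ (pow_nonneg' _ hP0 t _ q)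
    have hlQ : 0 ≤ Real.log Q := Real.log_nonneg hQ1
    rw [Phi_eq]
    split_ifs with h
    · rw [← hQ]
      have : hp n q.2 * Q * (Real.log Q / Q) = hp n q.2 * Real.log Q := by
        field_simp
      rw [this]
      have l1 : Real.log Q ≤ Real.log (1 + Q) := Real.log_le_log (by linarith) (by linarith)
      nlinarith [hp1 q.2, p0 q.2]
    · simp
  have e : ∑ q, (P ^ t) (g, 0) q * (hp n q.2 * Phi m g (WW n) q.1 * (Real.log Q / Q)) =
      (P ^ t).mulVec (fun q => hp n q.2 * Phi m g (WW n) q.1) (g, 0) * (Real.log Q / Q) := by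
    simp only [Matrix.mulVec, dotProduct, Finset.sum_mul]
    exact Finset.sum_congr rfl fun _ _ => by ring
  rw [e] at hlog
  have l2 : ee n ^ t * Q * (Real.log Q / Q) ≤ (P ^ t).mulVec (fun q => hp n q.2 * Phi m g (WW n) q.1) (g, 0) * (Real.log Q / Q) :=
    mul_le_mul_of_nonneg_right hsub (div_nonneg (Real.log_nonneg hQ1) (by linarith))
  have e2 : ee n ^ t * Q * (Real.log Q / Q) = ee n ^ t * ((WW n)ᶜ.card * Real.log m) := by
    rw [hQ, Real.log_pow]; field_simp
  linarith

lemma ent_zero (m : ℕ) (hn2 : 2 ≤ n) (hm : 2 ≤ m) (p : (ZMod n → Fin m) × ZMod n) :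
    (Real.exp 1)⁻¹ < relEnt ((lampChain (cycleWalk n) m ^ 0) p) (unif ((ZMod n → Fin m) × ZMod n)) := by
  have e : relEnt ((lampChain (cycleWalk n) m ^ 0) p) (unif ((ZMod n → Fin m) × ZMod n)) =
      Real.log ((n:ℝ) * (m:ℝ)^n) := by
    unfold relEnt
    rw [Finset.sum_eq_single p]
    · simp [Matrix.one_apply, unif, ZMod.card, mul_comm]
    · intro q _ hq
      simp [Matrix.one_apply, hq.symm]
    · simp
  rw [e]
  have h2 : (2:ℝ) ≤ n := by exact_mod_cast hn2
  have hm2 : (2:ℝ) ≤ m := by exact_mod_cast hm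
  have h3 : (1:ℝ) ≤ (m:ℝ)^n := one_le_pow₀ (by linarith)
  have h4 : Real.log 2 ≤ Real.log ((n:ℝ) * (m:ℝ)^n) :=
    Real.log_le_log (by norm_num) (by nlinarith)
  have h5 := Real.log_two_gt_d9
  have h6 : (Real.exp 1)⁻¹ ≤ 1/2 := by
    rw [inv_le_iff_one_le_mul₀ (Real.exp_pos 1)]
    have := Real.exp_one_gt_d9
    linarith
  linarith

lemma time_lower (m : ℕ) (hn2 : 2 ≤ n) (hm : 2 ≤ m) (t : ℕ)
    (h : ∀ p, relEnt ((lampChain (cycleWalk n) m ^ t) p) (unif ((ZMod n → Fin m) × ZMod n)) ≤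
      (Real.exp 1)⁻¹) :
    1 / 100000 * (n:ℝ)^2 * Real.log (n * Real.log m) ≤ t := by
  have hn2' : (2:ℝ) ≤ n := by exact_mod_cast hn2
  have hm2 : (2:ℝ) ≤ m := by exact_mod_cast hm
  have hm0 : 0 < m := by omega
  let g : ZMod n → Fin m := fun _ => ⟨0, hm0⟩
  have hlm : Real.log 2 ≤ Real.log m := Real.log_le_log (by norm_num) hm2
  have hl2 := Real.log_two_gt_d9
  have h6 : (Real.exp 1)⁻¹ ≤ 1/2 := by
    rw [inv_le_iff_one_le_mul₀ (Real.exp_pos 1)]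
    have := Real.exp_one_gt_d9
    linarith
  have a1 := (ent_lower n m hm g t).trans (h (g, 0))
  have a2 := card_WWc n hn2
  have ht1 : (1:ℝ) ≤ t := by
    rcases Nat.eq_zero_or_pos t with h0 | h0
    · subst h0
      exact absurd (h (g, 0)) (not_le.mpr (ent_zero n m hn2 hm _))
    · exact_mod_cast h0
  set M := (n:ℝ) * Real.log m with hM
  have hM1 : (1.386:ℝ) ≤ M := by nlinarith
  have hMp : 0 < M := by linarith
  have hnM : (n:ℝ) ≤ 1.5 * M := by nlinarith
  have hL0 : 0 ≤ Real.log M := Real.log_nonneg (by linarith)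
  have a3 : ee n ^ t * (M / 4) ≤ 2 := by
    have : ee n ^ t * (M / 4) ≤ ee n ^ t * ((WW n)ᶜ.card * Real.log m) := by
      refine mul_le_mul_of_nonneg_left ?_ (pow_nonneg (Real.exp_pos _).le t)
      have := mul_le_mul_of_nonneg_right a2 (by linarith : 0 ≤ Real.log m)
      rw [hM]; linarith
    linarith
  have a4 : Real.log M ≤ Real.log 8 + t * (20 / (n:ℝ)^2) := by
    have e : ee n ^ t = Real.exp (-(t * (20 / (n:ℝ)^2))) := by
      unfold ee; rw [← Real.exp_nat_mul]; congr 1; ring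
    rw [e, Real.exp_neg] at a3
    have hE := Real.exp_pos (t * (20 / (n:ℝ)^2))
    have : M ≤ 8 * Real.exp (t * (20 / (n:ℝ)^2)) := by
      rw [inv_mul_eq_div, div_le_iff₀ hE] at a3; linarith
    have := Real.log_le_log hMp this
    rwa [Real.log_mul (by norm_num) hE.ne', Real.log_exp] at this
  have l8 : Real.log 8 = 3 * Real.log 2 := by
    rw [show (8:ℝ) = 2^3 by norm_num, Real.log_pow]; norm_num
  have l2' := Real.log_two_lt_d9
  have n2 : (0:ℝ) < (n:ℝ)^2 := by positivity
  rcases le_total (Real.log M) 4.2 with hc | hc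
  · have hM68 : M ≤ 100 := by
      have : M ≤ Real.exp 4.2 := by rw [← Real.log_le_iff_le_exp hMp]; exact hc
      have h5 : Real.exp 4.2 ≤ Real.exp 1 ^ (4.2:ℝ) := by rw [← Real.exp_mul]; norm_num
      have h7 : Real.exp 4.2 ≤ (100:ℝ) := by
        have : Real.exp 4.2 = Real.exp 1 ^ 4 * Real.exp 0.2 := by
          rw [← Real.exp_nat_mul, ← Real.exp_add]; norm_num
        rw [this]
        have b1 := Real.exp_one_lt_d9
        have b2 : Real.exp 1 ^ 4 ≤ 55 := by
          have := pow_le_pow_left₀ (Real.exp_pos 1).le b1.le 4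
          refine this.trans ?_
          norm_num
        have b3 : Real.exp 0.2 ≤ 1.25 := by
          have := Real.add_one_le_exp (-0.2 : ℝ)
          rw [Real.exp_neg] at this
          have hp := Real.exp_pos (0.2:ℝ)
          have h9 : (Real.exp 0.2)⁻¹ * Real.exp 0.2 = 1 := inv_mul_cancel₀ hp.ne'
          nlinarith
        nlinarith [Real.exp_pos 1, Real.exp_pos (0.2:ℝ)]
      linarith
    have hn150 : (n:ℝ) ≤ 150 := by linarith
    have : (n:ℝ)^2 ≤ 22500 := by nlinarith
    have : (n:ℝ)^2 * Real.log M ≤ 22500 * 4.2 := mul_le_mul this hc hL0 (by norm_num)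
    linarith
  · have a5 : Real.log M / 2 ≤ t * (20 / (n:ℝ)^2) := by linarith
    have a6 : t * (20 / (n:ℝ)^2) = 20 * t / (n:ℝ)^2 := by ring
    rw [a6, le_div_iff₀ n2] at a5
    nlinarith [mul_nonneg n2.le hL0]

end Lower

/-- For the `m`-state lamplighter chain on the cycle `Z_n`,
`τ_ent = Θ(n² (log n + log log m))`: there are absolute constants `c₁, c₂ > 0` with
`c₁ n² log(n log m) ≤ τ_ent ≤ c₂ n² (log n + log log m)`. -/
theorem lamplighter_cycle_entropy_time :
    ∃ c₁ c₂ : ℝ, 0 < c₁ ∧ 0 < c₂ ∧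
      ∀ (n m : ℕ) [NeZero n], 2 ≤ n → 2 ≤ m →
        c₁ * (n : ℝ) ^ 2 * Real.log ((n : ℝ) * Real.log m) ≤
          (tauEnt (lampChain (cycleWalk n) m)
            (unif ((ZMod n → Fin m) × ZMod n)) (Real.exp 1)⁻¹ : ℝ) ∧
        (tauEnt (lampChain (cycleWalk n) m)
            (unif ((ZMod n → Fin m) × ZMod n)) (Real.exp 1)⁻¹ : ℝ) ≤
          c₂ * (n : ℝ) ^ 2 * (Real.log n + Real.log (Real.log m)) := by
  refine ⟨1 / 100000, 200, by norm_num, by norm_num, ?_⟩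
  intro n m _ hn2 hm
  have hn2' : (2:ℝ) ≤ n := by exact_mod_cast hn2
  have hm2 : (2:ℝ) ≤ m := by exact_mod_cast hm
  have hlm : Real.log 2 ≤ Real.log m := Real.log_le_log (by norm_num) hm2
  have hl2 := Real.log_two_gt_d9
  have hM1 : (1.386:ℝ) ≤ (n:ℝ) * Real.log m := by nlinarith
  have hlog : Real.log ((n:ℝ) * Real.log m) = Real.log n + Real.log (Real.log m) :=
    Real.log_mul (by linarith) (by linarith)
  have hL : (1/4:ℝ) ≤ Real.log ((n:ℝ) * Real.log m) := by
    have := Real.one_sub_inv_le_log_of_pos (by linarith : 0 < (n:ℝ) * Real.log m)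
    have h3 : ((n:ℝ) * Real.log m)⁻¹ ≤ 3/4 := by
      rw [inv_le_iff_one_le_mul₀ (by linarith)]; linarith
    linarith
  have hn4 : (4:ℝ) ≤ (n:ℝ)^2 := by nlinarith
  have hA : (1:ℝ) ≤ (n:ℝ)^2 * Real.log ((n:ℝ) * Real.log m) := by nlinarith
  have hmem : ⌈72 * (n:ℝ)^2 * Real.log ((n:ℝ) * Real.log m)⌉₊ ∈
      {n' | ∀ t ≥ n', ∀ x, relEnt ((lampChain (cycleWalk n) m ^ t) x)
        (unif ((ZMod n → Fin m) × ZMod n)) ≤ (Real.exp 1)⁻¹} := by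
    intro t ht x
    apply ent_upper n m hn2 hm x t
    exact (Nat.le_ceil _).trans (by exact_mod_cast ht)
  constructor
  · have := Nat.sInf_mem (Set.nonempty_of_mem hmem)
    exact time_lower n m hn2 hm _ (this _ le_rfl)
  · rw [← hlog]
    have h1 : tauEnt (lampChain (cycleWalk n) m) (unif ((ZMod n → Fin m) × ZMod n)) (Real.exp 1)⁻¹ ≤
        ⌈72 * (n:ℝ)^2 * Real.log ((n:ℝ) * Real.log m)⌉₊ := Nat.sInf_le hmem
    have h2 : (tauEnt (lampChain (cycleWalk n) m) (unif ((ZMod n → Fin m) × ZMod n)) (Real.exp 1)⁻¹ : ℝ) ≤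
        (⌈72 * (n:ℝ)^2 * Real.log ((n:ℝ) * Real.log m)⌉₊ : ℝ) := by exact_mod_cast h1
    have h3 := Nat.ceil_lt_add_one (by nlinarith : 0 ≤ 72 * (n:ℝ)^2 * Real.log ((n:ℝ) * Real.log m))
    nlinarith

end Paper
end

section
/- Consider the m-state lamplighter chain on the discrete cycle Z_n, started from the state in which the lamplighter is at a fixed vertex x and all lamps are in state 0. There is an absolute constant c > 0 such that for every a > 0 and t = a·n², the distribution μ_t at time t satisfies 1 + Var_π(μ_t/π) ≥ exp(−c·a)·m^{n/2}, where π is the uniform stationary distribution. Consequently, the L² mixing time satisfies τ₂ = Ω(n²·log N), where N = m^n. -/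
open Finset
open scoped Classical

namespace Paper

variable {X : Type} [Fintype X] [DecidableEq X]

theorem lampChain_count {V : Type} [Fintype V] [DecidableEq V] (m : ℕ) (f : V → Fin m)
    (s : Finset V) :
    (Finset.univ.filter (fun g : V → Fin m => ∀ z, z ∉ s → g z = f z)).card = m ^ s.card := by
  have : (Finset.univ.filter (fun g : V → Fin m => ∀ z, z ∉ s → g z = f z)) =
      Fintype.piFinset (fun z => if z ∈ s then Finset.univ else {f z}) := by
    ext g
    simp only [Finset.mem_filter, Finset.mem_univ, true_and, Fintype.mem_piFinset]
    refine forall_congr' fun z => ?_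
    by_cases hz : z ∈ s <;> simp [hz]
  rw [this, Fintype.card_piFinset]
  have : ∀ z, (if z ∈ s then (Finset.univ : Finset (Fin m)) else {f z}).card
      = if z ∈ s then m else 1 := by
    intro z; split_ifs <;> simp
  simp_rw [this]
  simp

theorem lampChain_inner {V : Type} [Fintype V] [DecidableEq V] (Pb : Matrix V V ℝ) (m : ℕ)
    (hm : 0 < m) (f : V → Fin m) (x y : V) :
    ∑ g : V → Fin m, lampChain Pb m (f, x) (g, y) = Pb x y := by
  have h := lampChain_count m f ({x, y} : Finset V)
  unfold lampChain
  dsimp only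
  rw [← Finset.sum_filter, Finset.sum_const]
  have : (Finset.univ.filter (fun g : V → Fin m => ∀ z, z ≠ x → z ≠ y → g z = f z)) =
      (Finset.univ.filter (fun g : V → Fin m => ∀ z, z ∉ ({x, y} : Finset V) → g z = f z)) := by
    ext g
    simp
  rw [this, h]
  have hm' : (m : ℝ) ≠ 0 := by positivity
  simp only [nsmul_eq_mul, Nat.cast_pow]
  rw [mul_left_comm, ← mul_pow, mul_inv_cancel₀ hm', one_pow, mul_one]

theorem lampChain_row {V : Type} [Fintype V] [DecidableEq V] (Pb : Matrix V V ℝ) (m : ℕ)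
    (hm : 0 < m) (hP : ∀ x, ∑ y, Pb x y = 1) (p : (V → Fin m) × V) :
    ∑ q, lampChain Pb m p q = 1 := by
  rw [Fintype.sum_prod_type_right]
  obtain ⟨f, x⟩ := p
  simp_rw [lampChain_inner Pb m hm]
  exact hP x

theorem lampChain_nonneg {V : Type} [Fintype V] [DecidableEq V] (Pb : Matrix V V ℝ) (m : ℕ)
    (hP : ∀ x y, 0 ≤ Pb x y) (p q : (V → Fin m) × V) : 0 ≤ lampChain Pb m p q := by
  unfold lampChain
  split_ifs
  · exact mul_nonneg (hP _ _) (by positivity)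
  · exact le_rfl

theorem lampChain_symm {V : Type} [Fintype V] [DecidableEq V] (Pb : Matrix V V ℝ) (m : ℕ)
    (hP : ∀ x y, Pb x y = Pb y x) (p q : (V → Fin m) × V) :
    lampChain Pb m p q = lampChain Pb m q p := by
  unfold lampChain
  have h : (∀ z, z ≠ p.2 → z ≠ q.2 → q.1 z = p.1 z) ↔
      (∀ z, z ≠ q.2 → z ≠ p.2 → p.1 z = q.1 z) :=
    ⟨fun h z a b => (h z b a).symm, fun h z a b => (h z b a).symm⟩
  simp only [h, hP p.2 q.2, Finset.pair_comm p.2 q.2]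

theorem cycleWalk_nonneg (n : ℕ) [NeZero n] (x y : ZMod n) : 0 ≤ cycleWalk n x y := by
  unfold cycleWalk
  positivity

theorem cycleWalk_sum (n : ℕ) [NeZero n] (x : ZMod n) (φ : ZMod n → ℝ) :
    ∑ y, cycleWalk n x y * φ y = 1 / 2 * φ x + 1 / 4 * φ (x + 1) + 1 / 4 * φ (x - 1) := by
  unfold cycleWalk
  simp [add_mul, Finset.sum_add_distrib, ite_mul]

theorem cycleWalk_row (n : ℕ) [NeZero n] (x : ZMod n) : ∑ y, cycleWalk n x y = 1 := by
  have := cycleWalk_sum n x (fun _ => 1)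
  simp only [mul_one] at this
  rw [this]; norm_num

theorem cycleWalk_symm (n : ℕ) [NeZero n] (x y : ZMod n) :
    cycleWalk n x y = cycleWalk n y x := by
  unfold cycleWalk
  have h1 : y = x ↔ x = y := eq_comm
  have h2 : y = x + 1 ↔ x = y - 1 := ⟨fun h => by rw [h]; ring, fun h => by rw [h]; ring⟩
  have h3 : y = x - 1 ↔ x = y + 1 := ⟨fun h => by rw [h]; ring, fun h => by rw [h]; ring⟩
  simp only [h1, h2, h3]
  ring

theorem pow_nonneg_entry (P : Matrix X X ℝ) (h : ∀ x y, 0 ≤ P x y) (t : ℕ) (x y : X) :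
    0 ≤ (P ^ t) x y := by
  induction t generalizing x y with
  | zero =>
    rw [pow_zero, Matrix.one_apply]; split_ifs <;> norm_num
  | succ t ih =>
    rw [pow_succ, Matrix.mul_apply]
    exact Finset.sum_nonneg fun z _ => mul_nonneg (ih _ _) (h _ _)

theorem pow_row (P : Matrix X X ℝ) (h : ∀ x, ∑ y, P x y = 1) (t : ℕ) (x : X) :
    ∑ y, (P ^ t) x y = 1 := by
  induction t generalizing x with
  | zero => simp [Matrix.one_apply]
  | succ t ih =>
    simp_rw [pow_succ', Matrix.mul_apply]
    rw [Finset.sum_comm]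
    simp_rw [← Finset.mul_sum, ih, mul_one, h]

theorem pow_col (P : Matrix X X ℝ) (h : ∀ y, ∑ x, P x y = 1) (t : ℕ) (y : X) :
    ∑ x, (P ^ t) x y = 1 := by
  induction t generalizing y with
  | zero => simp [Matrix.one_apply]
  | succ t ih =>
    simp_rw [pow_succ, Matrix.mul_apply]
    rw [Finset.sum_comm]
    simp_rw [← Finset.sum_mul, ih, one_mul, h]

/-- Minorization: the minimal entry of `Q ^ k` tends to `1 / N`. -/
theorem pow_lower (Q : Matrix X X ℝ) (hrow : ∀ x, ∑ y, Q x y = 1)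
    (hcol : ∀ y, ∑ x, Q x y = 1) (δ : ℝ) (hδ : ∀ x y, δ ≤ Q x y) (k : ℕ) :
    ∃ c : ℝ, 1 - (Fintype.card X : ℝ) * c = (1 - (Fintype.card X : ℝ) * δ) ^ k ∧
      ((k = 0 → c = 0) ∧ ∀ x y, c ≤ (Q ^ k) x y) := by
  induction k with
  | zero =>
    refine ⟨0, by simp, fun _ => rfl, fun x y => ?_⟩
    rw [pow_zero, Matrix.one_apply]; split_ifs <;> norm_num
  | succ k ih =>
    obtain ⟨c, hc, -, hQ⟩ := ih
    refine ⟨(1 - (Fintype.card X : ℝ) * δ) * c + δ, ?_, by simp, fun x y => ?_⟩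
    · rw [pow_succ, ← hc]; ring
    · rw [pow_succ', Matrix.mul_apply]
      have h1 : ∑ z, (Q x z - δ) * c ≤ ∑ z, (Q x z - δ) * (Q ^ k) z y :=
        Finset.sum_le_sum fun z _ =>
          mul_le_mul_of_nonneg_left (hQ z y) (sub_nonneg.2 (hδ x z))
      have h2 : ∑ z, (Q x z - δ) * (Q ^ k) z y = ∑ z, Q x z * (Q ^ k) z y - δ := by
        simp_rw [sub_mul]
        rw [Finset.sum_sub_distrib, ← Finset.mul_sum, pow_col Q hcol, mul_one]
      have h3 : ∑ z, (Q x z - δ) * c = (1 - (Fintype.card X : ℝ) * δ) * c := by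
        rw [← Finset.sum_mul, Finset.sum_sub_distrib, hrow]
        simp
      linarith

theorem exists_mix [Nonempty X] (P : Matrix X X ℝ) (h0 : ∀ x y, 0 ≤ P x y)
    (hrow : ∀ x, ∑ y, P x y = 1)
    (hcol : ∀ y, ∑ x, P x y = 1) (T : ℕ) (hT : ∀ x y, 0 < (P ^ T) x y) :
    ∃ t, ∀ x, chiDist P (unif X) t x ≤ 1 / 4 := by
  obtain ⟨⟨a, b⟩, hab⟩ := Finite.exists_min (fun p : X × X => (P ^ T) p.1 p.2)
  set N : ℝ := (Fintype.card X : ℝ) with hN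
  have hNpos : 1 ≤ N := by
    have : 0 < Fintype.card X := Fintype.card_pos
    rw [hN]; exact_mod_cast this
  set δ := (P ^ T) a b with hδdef
  have hδ : 0 < δ := hT a b
  have hδ' : ∀ x y, δ ≤ (P ^ T) x y := fun x y => hab (x, y)
  set r := 1 - N * δ with hr
  have hr1 : r < 1 := by have : 0 < N * δ := by positivity
                         linarith
  have hr0 : 0 ≤ r := by
    have := pow_row P hrow T a
    have h2 : ∑ y : X, δ ≤ ∑ y, (P ^ T) a y := Finset.sum_le_sum fun y _ => hδ' a y
    rw [this] at h2
    simp only [Finset.sum_const, nsmul_eq_mul, Finset.card_univ] at h2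
    linarith
  obtain ⟨k, hk⟩ := exists_pow_lt_of_lt_one (show (0 : ℝ) < 1 / (4 * N) by positivity) hr1
  obtain ⟨c, hc, -, hQ⟩ := pow_lower (P ^ T) (pow_row P hrow T) (pow_col P hcol T) δ hδ' k
  rw [← hN, ← hr] at hc
  refine ⟨T * k, fun x => ?_⟩
  unfold chiDist
  rw [pow_mul]
  set η := r ^ k with hη
  have hη0 : 0 ≤ η := pow_nonneg hr0 k
  have hNη : N * η ≤ 1 / 4 := by
    rw [lt_div_iff₀ (by positivity)] at hk
    linarith
  apply Real.sqrt_le_iff.2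
  refine ⟨by norm_num, ?_⟩
  have hent : ∀ y, ((((P ^ T) ^ k) x y) / unif X y - 1) ^ 2 * unif X y ≤ (1 / 4) ^ 2 * N⁻¹ := by
    intro y
    have hu : unif X y = N⁻¹ := rfl
    rw [hu, div_inv_eq_mul]
    have hup : ((P ^ T) ^ k) x y ≤ c + η := by
      have h1 := pow_row (P ^ T) (pow_row P hrow T) k x
      have h2 : ((P ^ T) ^ k) x y - c ≤ ∑ z, (((P ^ T) ^ k) x z - c) :=
        Finset.single_le_sum (f := fun z => ((P ^ T) ^ k) x z - c)
          (fun z _ => sub_nonneg.2 (hQ x z)) (Finset.mem_univ y)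
      rw [Finset.sum_sub_distrib, h1] at h2
      simp only [Finset.sum_const, nsmul_eq_mul, Finset.card_univ] at h2
      linarith
    have hlo := hQ x y
    have e1 : N * c ≤ N * ((P ^ T) ^ k) x y := mul_le_mul_of_nonneg_left hlo (by linarith)
    have e2 : N * ((P ^ T) ^ k) x y ≤ N * (c + η) := mul_le_mul_of_nonneg_left hup (by linarith)
    have e3 : η ≤ N * η := le_mul_of_one_le_left hη0 hNpos
    apply mul_le_mul_of_nonneg_right _ (by positivity)
    apply sq_le_sq'
    · linarith
    · linarith
  refine (Finset.sum_le_sum fun y _ => hent y).trans ?_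
  rw [Finset.sum_const, Finset.card_univ, nsmul_eq_mul, ← hN]
  field_simp
  norm_num

theorem reach_uniform (P : Matrix X X ℝ) (h0 : ∀ x y, 0 ≤ P x y) (hd : ∀ x, 0 < P x x)
    (hreach : ∀ x y, ∃ k, 0 < (P ^ k) x y) : ∃ T, ∀ x y, 0 < (P ^ T) x y := by
  choose K hK using hreach
  have hmono : ∀ x y k j, 0 < (P ^ k) x y → 0 < (P ^ (k + j)) x y := by
    intro x y k j h
    induction j with
    | zero => simpa using h
    | succ j ih =>
      rw [← add_assoc, pow_succ, Matrix.mul_apply]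
      refine lt_of_lt_of_le (mul_pos ih (hd y)) ?_
      exact Finset.single_le_sum (f := fun z => (P ^ (k + j)) x z * P z y)
        (fun z _ => mul_nonneg (pow_nonneg_entry P h0 _ _ _) (h0 _ _)) (Finset.mem_univ y)
  refine ⟨∑ p : X × X, K p.1 p.2, fun x y => ?_⟩
  have hle : K x y ≤ ∑ p : X × X, K p.1 p.2 :=
    Finset.single_le_sum (f := fun p : X × X => K p.1 p.2) (fun _ _ => Nat.zero_le _)
      (Finset.mem_univ (x, y))
  obtain ⟨j, hj⟩ := Nat.exists_eq_add_of_le hle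
  rw [hj]
  exact hmono x y _ j (hK x y)

theorem reach_trans (P : Matrix X X ℝ) (h0 : ∀ x y, 0 ≤ P x y) {x y z : X}
    (h1 : ∃ k, 0 < (P ^ k) x y) (h2 : ∃ k, 0 < (P ^ k) y z) : ∃ k, 0 < (P ^ k) x z := by
  obtain ⟨a, ha⟩ := h1
  obtain ⟨b, hb⟩ := h2
  refine ⟨a + b, ?_⟩
  rw [pow_add, Matrix.mul_apply]
  refine lt_of_lt_of_le (mul_pos ha hb) ?_
  exact Finset.single_le_sum (f := fun w => (P ^ a) x w * (P ^ b) w z)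
    (fun w _ => mul_nonneg (pow_nonneg_entry P h0 _ _ _) (pow_nonneg_entry P h0 _ _ _))
    (Finset.mem_univ y)

theorem lamp_step_s12 (n m : ℕ) [NeZero n] (hm : 0 < m) (f g : ZMod n → Fin m) (x y : ZMod n)
    (hxy : 0 < cycleWalk n x y) (hfg : ∀ z, z ≠ x → g z = f z) :
    0 < lampChain (cycleWalk n) m (f, x) (g, y) := by
  unfold lampChain
  rw [if_pos (fun z hz _ => hfg z hz)]
  have : (0 : ℝ) < m := by exact_mod_cast hm
  positivity

theorem lamp_reach (n m : ℕ) [NeZero n] (hm : 0 < m) (p q : (ZMod n → Fin m) × ZMod n) :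
    ∃ k, 0 < (lampChain (cycleWalk n) m ^ k) p q := by
  have h0 := lampChain_nonneg (cycleWalk n) m (cycleWalk_nonneg n)
  have step : ∀ p q, 0 < lampChain (cycleWalk n) m p q →
      ∃ k, 0 < (lampChain (cycleWalk n) m ^ k) p q := fun p q h => ⟨1, by simpa using h⟩
  have hs : ∀ x : ZMod n, 0 < cycleWalk n x x := by
    intro x; unfold cycleWalk
    rw [if_pos rfl]
    positivity
  have hs1 : ∀ x : ZMod n, 0 < cycleWalk n x (x + 1) := by
    intro x; unfold cycleWalk
    rw [if_pos (rfl : x + 1 = x + 1)]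
    positivity
  have hmove : ∀ (f : ZMod n → Fin m) (x : ZMod n) (j : ℕ),
      ∃ k, 0 < (lampChain (cycleWalk n) m ^ k) (f, x) (f, x + j) := by
    intro f x j
    induction j with
    | zero => exact ⟨0, by simp⟩
    | succ j ih =>
      refine reach_trans _ h0 ih (step _ _ ?_)
      have := lamp_step_s12 n m hm f f (x + j) (x + j + 1) (hs1 _) (fun _ _ => rfl)
      simpa [add_assoc] using this
  have hmove' : ∀ (f : ZMod n → Fin m) (x y : ZMod n),
      ∃ k, 0 < (lampChain (cycleWalk n) m ^ k) (f, x) (f, y) := by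
    intro f x y
    have := hmove f x (y - x).val
    simpa using this
  obtain ⟨f, x⟩ := p
  obtain ⟨g, y⟩ := q
  have key : ∀ s : Finset (ZMod n),
      ∃ k, 0 < (lampChain (cycleWalk n) m ^ k) (f, x) (fun z => if z ∈ s then g z else f z, y) := by
    intro s
    induction s using Finset.induction_on with
    | empty => simpa using hmove' f x y
    | insert a s ha ih =>
      refine reach_trans _ h0 ih (reach_trans _ h0 (hmove' _ y a) (reach_trans _ h0
        (step _ _ (lamp_step_s12 n m hm _ (fun z => if z ∈ insert a s then g z else f z) a a (hs a) ?_))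
        (hmove' _ a y)))
      intro z hz
      simp [hz]
  simpa using key Finset.univ

theorem lamp_mix (n m : ℕ) [NeZero n] (hm : 0 < m) :
    ∃ t, ∀ x, chiDist (lampChain (cycleWalk n) m) (unif ((ZMod n → Fin m) × ZMod n)) t x ≤ 1 / 4 := by
  have h0 := lampChain_nonneg (cycleWalk n) m (cycleWalk_nonneg n)
  have hrow := lampChain_row (cycleWalk n) m hm (cycleWalk_row n)
  have hcol : ∀ q, ∑ p, lampChain (cycleWalk n) m p q = 1 := by
    intro q
    simp_rw [fun p => lampChain_symm (cycleWalk n) m (cycleWalk_symm n) p q]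
    exact hrow q
  have hd : ∀ p, 0 < lampChain (cycleWalk n) m p p := by
    rintro ⟨f, x⟩
    apply lamp_step_s12 n m hm f f x x _ (fun _ _ => rfl)
    unfold cycleWalk
    rw [if_pos rfl]
    positivity
  obtain ⟨T, hT⟩ := reach_uniform _ h0 hd (lamp_reach n m hm)
  haveI : Nonempty ((ZMod n → Fin m) × ZMod n) := ⟨(fun _ => ⟨0, hm⟩, 0)⟩
  exact exists_mix _ h0 hrow hcol T hT

/-- Sub-eigenfunction iteration. -/
theorem subeig (P : Matrix X X ℝ) (h0 : ∀ x y, 0 ≤ P x y) (F : X → ℝ) (l : ℝ) (hl : 0 ≤ l)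
    (hF : ∀ x, l * F x ≤ ∑ y, P x y * F y) (t : ℕ) (x : X) :
    l ^ t * F x ≤ ∑ y, (P ^ t) x y * F y := by
  induction t generalizing x with
  | zero => simp [Matrix.one_apply]
  | succ t ih =>
    simp_rw [pow_succ', Matrix.mul_apply, Finset.sum_mul]
    rw [Finset.sum_comm]
    simp_rw [mul_assoc, ← Finset.mul_sum]
    calc l * (l ^ t * F x) = l ^ t * (l * F x) := by ring
      _ ≤ l ^ t * ∑ y, P x y * F y := mul_le_mul_of_nonneg_left (hF x) (pow_nonneg hl t)
      _ = ∑ y, P x y * (l ^ t * F y) := by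
        rw [Finset.mul_sum]; exact Finset.sum_congr rfl fun _ _ => by ring
      _ ≤ _ := Finset.sum_le_sum fun y _ => mul_le_mul_of_nonneg_left (ih y) (h0 _ _)

theorem one_add_var (μ : X → ℝ) [Nonempty X] (hμ : ∑ x, μ x = 1) :
    1 + ∑ q, unif X q * (μ q / unif X q - 1) ^ 2 = (Fintype.card X : ℝ) * ∑ q, μ q ^ 2 := by
  have hN : (Fintype.card X : ℝ) ≠ 0 := by
    have : 0 < Fintype.card X := Fintype.card_pos
    positivity
  have : ∀ q, unif X q * (μ q / unif X q - 1) ^ 2 =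
      (Fintype.card X : ℝ) * μ q ^ 2 - 2 * μ q + (Fintype.card X : ℝ)⁻¹ := by
    intro q
    unfold unif
    field_simp
    ring
  simp_rw [this]
  rw [Finset.sum_add_distrib, Finset.sum_sub_distrib, ← Finset.mul_sum, ← Finset.mul_sum, hμ]
  simp only [Finset.sum_const, Finset.card_univ, nsmul_eq_mul]
  rw [mul_inv_cancel₀ hN]
  ring

/-- Cosine bump on the cycle centred at `x₀`. -/
noncomputable def bump (n L : ℕ) (x₀ y : ZMod n) : ℝ :=
  if |(y - x₀).valMinAbs| < (L : ℤ) then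
    Real.cos (((y - x₀).valMinAbs : ℝ) * (Real.pi / (2 * L))) else 0

theorem bump_cos_nonneg (L : ℕ) (k : ℤ) (hk : |k| ≤ (L : ℤ)) :
    0 ≤ Real.cos ((k : ℝ) * (Real.pi / (2 * L))) := by
  rcases Nat.eq_zero_or_pos L with rfl | hL
  · simp
  have hL' : (0 : ℝ) < L := by exact_mod_cast hL
  have h1 : |(k : ℝ)| ≤ L := by exact_mod_cast hk
  rw [abs_le] at h1
  have hp := Real.pi_pos
  have e : (L : ℝ) * (Real.pi / (2 * L)) = Real.pi / 2 := by field_simp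
  have hpos : 0 ≤ Real.pi / (2 * L) := by positivity
  apply Real.cos_nonneg_of_mem_Icc
  constructor
  · have := mul_le_mul_of_nonneg_right h1.1 hpos
    linarith
  · have := mul_le_mul_of_nonneg_right h1.2 hpos
    linarith

theorem bump_nonneg (n L : ℕ) (x₀ y : ZMod n) : 0 ≤ bump n L x₀ y := by
  unfold bump
  split_ifs with h
  · exact bump_cos_nonneg L _ h.le
  · exact le_rfl

theorem bump_le_one (n L : ℕ) (x₀ y : ZMod n) : bump n L x₀ y ≤ 1 := by
  unfold bump
  split_ifs with h
  · exact Real.cos_le_one _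
  · norm_num

theorem bump_ge (n L : ℕ) [NeZero n] (hL : 0 < L) (hLn : 2 * L < n + 2) (x₀ y : ZMod n) (k : ℤ)
    (hk : |k| ≤ (L : ℤ)) (hy : y = x₀ + k) :
    Real.cos ((k : ℝ) * (Real.pi / (2 * L))) ≤ bump n L x₀ y := by
  rcases hk.lt_or_eq with h | h
  · have : (y - x₀).valMinAbs = k := by
      rw [ZMod.valMinAbs_spec]
      rw [abs_lt] at h
      refine ⟨by rw [hy]; ring, ?_⟩
      constructor <;> omega
    unfold bump
    rw [this, if_pos h]
  · have hL' : (0 : ℝ) < L := by exact_mod_cast hL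
    have : Real.cos ((k : ℝ) * (Real.pi / (2 * L))) = 0 := by
      have h1 : |(k : ℝ)| = L := by exact_mod_cast h
      rw [← Real.cos_abs, abs_mul, h1, abs_of_pos (by positivity : 0 < Real.pi / (2 * (L : ℝ)))]
      rw [show (L : ℝ) * (Real.pi / (2 * L)) = Real.pi / 2 by field_simp]
      exact Real.cos_pi_div_two
    rw [this]
    exact bump_nonneg _ _ _ _

theorem bump_subeig (n L : ℕ) [NeZero n] (hL : 0 < L) (hLn : 2 * L < n + 2) (x₀ x : ZMod n)
    (hx : |(x - x₀).valMinAbs| < (L : ℤ)) :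
    Real.cos (Real.pi / (4 * L)) ^ 2 * bump n L x₀ x ≤ ∑ y, cycleWalk n x y * bump n L x₀ y := by
  rw [cycleWalk_sum]
  set k := (x - x₀).valMinAbs with hk
  have hxk : x = x₀ + (k : ℤ) := by
    rw [hk, ZMod.coe_valMinAbs]; ring
  have hb : bump n L x₀ x = Real.cos ((k : ℝ) * (Real.pi / (2 * L))) := by
    unfold bump; rw [← hk, if_pos hx]
  rw [abs_lt] at hx
  have h1 := bump_ge n L hL hLn x₀ (x + 1) (k + 1) (by rw [abs_le]; constructor <;> omega)
    (by push_cast; rw [← add_assoc, ← hxk])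
  have h2 := bump_ge n L hL hLn x₀ (x - 1) (k - 1) (by rw [abs_le]; constructor <;> omega)
    (by push_cast; rw [← add_sub_assoc, ← hxk])
  push_cast at h1 h2
  rw [add_mul, one_mul, Real.cos_add] at h1
  rw [sub_mul, one_mul, Real.cos_sub] at h2
  have h3 : Real.cos (Real.pi / (4 * L)) ^ 2 = 1 / 2 + Real.cos (Real.pi / (2 * L)) / 2 := by
    rw [Real.cos_sq]
    congr 3
    field_simp
    ring
  rw [h3, hb]
  linarith

theorem lam_lower (L : ℕ) (hL : 0 < L) :
    Real.exp (-(2 * (Real.pi / (4 * L)) ^ 2)) ≤ Real.cos (Real.pi / (4 * L)) ^ 2 := by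
  have hL' : (1 : ℝ) ≤ L := by exact_mod_cast hL
  have hp := Real.pi_pos
  set θ := Real.pi / (4 * L) with hθ
  have h0 : 0 ≤ θ := by positivity
  have h1 : θ ≤ Real.pi / 4 := by
    apply div_le_div_of_nonneg_left hp.le (by norm_num); linarith
  have hc : Real.sqrt 2 / 2 ≤ Real.cos θ := by
    rw [← Real.cos_pi_div_four]
    exact Real.cos_le_cos_of_nonneg_of_le_pi h0 (by linarith) h1
  have hl : 1 / 2 ≤ Real.cos θ ^ 2 := by
    have h2 : (Real.sqrt 2 / 2) ^ 2 = 1 / 2 := by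
      rw [div_pow, Real.sq_sqrt (by norm_num)]; norm_num
    rw [← h2]
    exact pow_le_pow_left₀ (by positivity) hc 2
  have hs : 1 - Real.cos θ ^ 2 ≤ θ ^ 2 := by
    rw [← Real.sin_sq]
    have := Real.sin_le h0
    have hs0 : 0 ≤ Real.sin θ := Real.sin_nonneg_of_nonneg_of_le_pi h0 (by linarith)
    exact pow_le_pow_left₀ hs0 this 2
  set l := Real.cos θ ^ 2 with hldef
  rw [Real.exp_neg]
  apply inv_le_of_inv_le₀ (by linarith)
  refine le_trans ?_ (Real.add_one_le_exp _)
  rw [inv_le_iff_one_le_mul₀ (by linarith)]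
  have : 0 ≤ θ ^ 2 := by positivity
  nlinarith

theorem lamp_lower (n m : ℕ) [NeZero n] (hn : 2 ≤ n) (hm : 0 < m) (x₀ : ZMod n) (t : ℕ) :
    Real.exp (-(160 * ((t : ℝ) / (n : ℝ) ^ 2))) * (m : ℝ) ^ ((n : ℝ) / 2) ≤
      1 + ∑ q : (ZMod n → Fin m) × ZMod n,
        unif ((ZMod n → Fin m) × ZMod n) q *
          (((lampChain (cycleWalk n) m ^ t) ((fun _ => ⟨0, hm⟩), x₀) q) /
              unif ((ZMod n → Fin m) × ZMod n) q - 1) ^ 2 := by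
  have h0 := lampChain_nonneg (cycleWalk n) m (cycleWalk_nonneg n)
  have hrow := lampChain_row (cycleWalk n) m hm (cycleWalk_row n)
  haveI : Nonempty ((ZMod n → Fin m) × ZMod n) := ⟨(fun _ => ⟨0, hm⟩, 0)⟩
  rw [one_add_var _ (pow_row _ hrow t _)]
  obtain ⟨L, hLdef⟩ : ∃ L, L = (n + 2) / 4 := ⟨_, rfl⟩
  have hL : 0 < L := by omega
  have hLn : 2 * L < n + 2 := by omega
  set B : Finset (ZMod n) := Finset.univ.filter
    (fun y => |(y - x₀).valMinAbs| < (L : ℤ)) with hB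
  have hBcard : 2 * B.card ≤ n := by
    have : B ⊆ (Finset.Ioo (-(L : ℤ)) L).image (fun k : ℤ => x₀ + (k : ZMod n)) := by
      intro y hy
      rw [hB, Finset.mem_filter, abs_lt] at hy
      rw [Finset.mem_image]
      refine ⟨(y - x₀).valMinAbs, Finset.mem_Ioo.2 hy.2, ?_⟩
      rw [ZMod.coe_valMinAbs]; ring
    have h1 := (Finset.card_le_card this).trans Finset.card_image_le
    rw [Int.card_Ioo] at h1
    omega
  set z0 : ZMod n → Fin m := fun _ => ⟨0, hm⟩ with hz0
  set S : Finset ((ZMod n → Fin m) × ZMod n) :=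
    (Finset.univ.filter (fun g : ZMod n → Fin m => ∀ z, z ∉ B → g z = z0 z)) ×ˢ B with hS
  have hScard : S.card = m ^ B.card * B.card := by
    rw [hS, Finset.card_product, lampChain_count]
  set F : (ZMod n → Fin m) × ZMod n → ℝ :=
    fun q => if ∀ z, z ∉ B → q.1 z = z0 z then bump n L x₀ q.2 else 0 with hF
  set l := Real.cos (Real.pi / (4 * L)) ^ 2 with hl
  have hl0 : 0 ≤ l := by positivity
  have hF0 : ∀ q, 0 ≤ F q := by
    intro q; rw [hF]; dsimp only
    split_ifs
    · exact bump_nonneg _ _ _ _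
    · exact le_rfl
  have hsub : ∀ p, l * F p ≤ ∑ q, lampChain (cycleWalk n) m p q * F q := by
    rintro ⟨f, x⟩
    by_cases hfx : (∀ z, z ∉ B → f z = z0 z) ∧ x ∈ B
    · obtain ⟨hf, hx⟩ := hfx
      have e1 : F (f, x) = bump n L x₀ x := by rw [hF]; exact if_pos hf
      rw [e1, Fintype.sum_prod_type_right]
      have e2 : ∀ y, ∑ g, lampChain (cycleWalk n) m (f, x) (g, y) * F (g, y) =
          cycleWalk n x y * bump n L x₀ y := by
        intro y
        rw [← lampChain_inner (cycleWalk n) m hm f x y, Finset.sum_mul]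
        refine Finset.sum_congr rfl fun g _ => ?_
        by_cases hy : y ∈ B
        · by_cases hg : ∀ z, z ≠ x → z ≠ y → g z = f z
          · have : F (g, y) = bump n L x₀ y := by
              rw [hF]
              refine if_pos fun z hz => ?_
              rw [← hf z hz]
              exact hg z (fun h => hz (h ▸ hx)) (fun h => hz (h ▸ hy))
            rw [this]
          · have : lampChain (cycleWalk n) m (f, x) (g, y) = 0 := by
              unfold lampChain; exact if_neg hg
            rw [this, zero_mul, zero_mul]
        · have hb : bump n L x₀ y = 0 := by
            unfold bump
            refine if_neg fun h => hy ?_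
            rw [hB, Finset.mem_filter]; exact ⟨Finset.mem_univ _, h⟩
          have : F (g, y) = 0 := by
            rw [hF]; dsimp only; rw [hb, ite_self]
          rw [this, hb]
      simp_rw [e2]
      apply bump_subeig n L hL hLn
      rw [hB, Finset.mem_filter] at hx
      exact hx.2
    · have : F (f, x) = 0 := by
        rw [hF]; dsimp only
        split_ifs with h
        · unfold bump
          refine if_neg fun h' => hfx ⟨h, ?_⟩
          rw [hB, Finset.mem_filter]; exact ⟨Finset.mem_univ _, h'⟩
        · rfl
      rw [this, mul_zero]
      exact Finset.sum_nonneg fun q _ => mul_nonneg (h0 _ _) (hF0 _)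
  have hmain := subeig _ h0 F l hl0 hsub t (z0, x₀)
  have hF1 : F (z0, x₀) = 1 := by
    rw [hF]; dsimp only
    rw [if_pos (fun _ _ => rfl)]
    unfold bump
    simp [hL]
  rw [hF1, mul_one] at hmain
  set μ := fun q => (lampChain (cycleWalk n) m ^ t) (z0, x₀) q with hμ
  have hμ0 : ∀ q, 0 ≤ μ q := fun q => pow_nonneg_entry _ h0 t _ _
  have hS1 : l ^ t ≤ ∑ q ∈ S, μ q := by
    refine hmain.trans ?_
    rw [← Finset.sum_subset (Finset.subset_univ S)]
    · refine Finset.sum_le_sum fun q _ => ?_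
      have : F q ≤ 1 := by
        rw [hF]; dsimp only
        split_ifs
        · exact bump_le_one _ _ _ _
        · norm_num
      exact mul_le_of_le_one_right (hμ0 q) this
    · intro q _ hq
      have : F q = 0 := by
        rw [hF]; dsimp only
        split_ifs with h
        · unfold bump
          refine if_neg fun h' => hq ?_
          rw [hS, Finset.mem_product, Finset.mem_filter, hB, Finset.mem_filter]
          exact ⟨⟨Finset.mem_univ _, h⟩, Finset.mem_univ _, h'⟩
        · rfl
      rw [this, mul_zero]
  have hCS : (∑ q ∈ S, μ q) ^ 2 ≤ S.card * ∑ q ∈ S, μ q ^ 2 := sq_sum_le_card_mul_sum_sq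
  have hle : ∑ q ∈ S, μ q ^ 2 ≤ ∑ q, μ q ^ 2 :=
    Finset.sum_le_sum_of_subset_of_nonneg (Finset.subset_univ S) fun _ _ _ => sq_nonneg _
  have hsq : (l ^ t) ^ 2 ≤ (m : ℝ) ^ B.card * B.card * ∑ q, μ q ^ 2 := by
    have h1 : (l ^ t) ^ 2 ≤ (∑ q ∈ S, μ q) ^ 2 := pow_le_pow_left₀ (by positivity) hS1 2
    have h2 : (S.card : ℝ) * ∑ q ∈ S, μ q ^ 2 ≤ S.card * ∑ q, μ q ^ 2 :=
      mul_le_mul_of_nonneg_left hle (by positivity)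
    rw [hScard] at h2 hCS
    push_cast at h2 hCS
    linarith
  have hm1 : (1 : ℝ) ≤ m := by exact_mod_cast hm
  have hcard : (Fintype.card ((ZMod n → Fin m) × ZMod n) : ℝ) = (m : ℝ) ^ n * n := by
    simp [Fintype.card_prod, ZMod.card]
  have hnpos : (0 : ℝ) < n := by positivity
  -- exponential bound
  have hexp : Real.exp (-(160 * ((t : ℝ) / (n : ℝ) ^ 2))) ≤ (l ^ t) ^ 2 := by
    have h1 := lam_lower L hL
    rw [← hl] at h1
    have h2 : Real.exp (-(2 * (Real.pi / (4 * L)) ^ 2)) ^ (t * 2) ≤ l ^ (t * 2) :=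
      pow_le_pow_left₀ (by positivity) h1 _
    rw [← pow_mul]
    refine le_trans ?_ h2
    rw [← Real.exp_nat_mul]
    apply Real.exp_le_exp.2
    have hLn8 : (n : ℝ) ≤ 8 * L := by
      have : n ≤ 8 * L := by omega
      exact_mod_cast this
    have hL' : (0 : ℝ) < L := by exact_mod_cast hL
    have h3 : Real.pi / (4 * L) ≤ 2 * Real.pi / n := by
      rw [div_le_div_iff₀ (by positivity) hnpos]
      have := Real.pi_pos
      nlinarith
    have h4 : (Real.pi / (4 * L)) ^ 2 ≤ 40 / (n : ℝ) ^ 2 := by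
      refine (pow_le_pow_left₀ (by positivity) h3 2).trans ?_
      rw [div_pow]
      apply div_le_div_of_nonneg_right _ (by positivity)
      have := Real.pi_lt_d2
      have := Real.pi_pos
      nlinarith
    have h5 := mul_le_mul_of_nonneg_left h4 (Nat.cast_nonneg (α := ℝ) t)
    push_cast
    have h6 : (t : ℝ) * (40 / (n : ℝ) ^ 2) = 40 * ((t : ℝ) / (n : ℝ) ^ 2) := by ring
    rw [h6] at h5
    linarith
  have hpow : (m : ℝ) ^ ((n : ℝ) / 2) * (m : ℝ) ^ B.card ≤ (m : ℝ) ^ n := by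
    rw [← Real.rpow_natCast (m : ℝ) B.card, ← Real.rpow_natCast (m : ℝ) n,
      ← Real.rpow_add (by linarith)]
    apply Real.rpow_le_rpow_of_exponent_le hm1
    have : (2 : ℝ) * B.card ≤ n := by exact_mod_cast hBcard
    linarith
  rw [hcard]
  set Q := ∑ q, μ q ^ 2 with hQ
  have hQ0 : 0 ≤ Q := Finset.sum_nonneg fun _ _ => sq_nonneg _
  have hBn : (B.card : ℝ) ≤ n := by
    have : B.card ≤ n := by omega
    exact_mod_cast this
  have hr0 : 0 ≤ (m : ℝ) ^ ((n : ℝ) / 2) := by positivity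
  calc Real.exp (-(160 * ((t : ℝ) / (n : ℝ) ^ 2))) * (m : ℝ) ^ ((n : ℝ) / 2)
      ≤ ((m : ℝ) ^ B.card * B.card * Q) * (m : ℝ) ^ ((n : ℝ) / 2) :=
        mul_le_mul_of_nonneg_right (hexp.trans hsq) hr0
    _ = ((m : ℝ) ^ ((n : ℝ) / 2) * (m : ℝ) ^ B.card) * B.card * Q := by ring
    _ ≤ (m : ℝ) ^ n * n * Q := by gcongr

/-- For the `m`-state lamplighter chain on the cycle `Z_n` started
with all lamps `0` and the lamplighter at `x₀`: there is an absolute `c > 0` such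
that at any time `t = a n²`, `1 + Var_π(μ_t/π) ≥ exp(-c a) m^(n/2)`; consequently
`τ₂ = Ω(n² log N)` with `N = mⁿ`. -/
theorem lamplighter_cycle_L2_lower :
    ∃ c c' : ℝ, 0 < c ∧ 0 < c' ∧
      ∀ (n m : ℕ) [NeZero n] (hn : 2 ≤ n) (hm : 2 ≤ m) (x₀ : ZMod n),
        (∀ t : ℕ,
          Real.exp (-(c * ((t : ℝ) / (n : ℝ) ^ 2))) * (m : ℝ) ^ ((n : ℝ) / 2) ≤
            1 + ∑ q : (ZMod n → Fin m) × ZMod n,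
              unif ((ZMod n → Fin m) × ZMod n) q *
                (((lampChain (cycleWalk n) m ^ t) ((fun _ => ⟨0, by omega⟩), x₀) q) /
                    unif ((ZMod n → Fin m) × ZMod n) q - 1) ^ 2) ∧
        c' * (n : ℝ) ^ 2 * Real.log ((m : ℝ) ^ n) ≤
          (tau2 (lampChain (cycleWalk n) m) (unif ((ZMod n → Fin m) × ZMod n)) : ℝ) := by
  refine ⟨160, 1 / 640, by norm_num, by norm_num, ?_⟩
  intro n m _ hn hm x₀
  have hm0 : 0 < m := by omega
  refine ⟨fun t => lamp_lower n m hn hm0 x₀ t, ?_⟩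
  have hmem : tau2 (lampChain (cycleWalk n) m) (unif ((ZMod n → Fin m) × ZMod n)) ∈
      {t | ∀ x, chiDist (lampChain (cycleWalk n) m)
        (unif ((ZMod n → Fin m) × ZMod n)) t x ≤ 1 / 4} :=
    Nat.sInf_mem (lamp_mix n m hm0)
  set T := tau2 (lampChain (cycleWalk n) m) (unif ((ZMod n → Fin m) × ZMod n)) with hT
  have h1 := hmem ((fun _ => ⟨0, hm0⟩), x₀)
  have h2 := lamp_lower n m hn hm0 x₀ T
  unfold chiDist at h1
  rw [Real.sqrt_le_iff] at h1
  have h3 := h1.2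
  simp_rw [mul_comm _ (unif ((ZMod n → Fin m) × ZMod n) _)] at h3
  have h4 : Real.exp (-(160 * ((T : ℝ) / (n : ℝ) ^ 2))) * (m : ℝ) ^ ((n : ℝ) / 2) ≤ 1 + 1 / 16 := by
    linarith
  have hmpos : (0 : ℝ) < m := by exact_mod_cast hm0
  have hnpos : (0 : ℝ) < n := by positivity
  rw [Real.rpow_def_of_pos hmpos, ← Real.exp_add] at h4
  have h5 := (Real.add_one_le_exp _).trans h4
  have hlog : 1 / 2 ≤ Real.log m := by
    have : Real.log 2 ≤ Real.log m := Real.log_le_log (by norm_num) (by exact_mod_cast hm)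
    have := Real.log_two_gt_d9
    linarith
  have hn2 : (2 : ℝ) ≤ n := by exact_mod_cast hn
  rw [Real.log_pow]
  have h6 : 1 ≤ n * Real.log m := by nlinarith
  have h7 : n * Real.log m / 640 ≤ (T : ℝ) / (n : ℝ) ^ 2 := by linarith
  rw [le_div_iff₀ (by positivity)] at h7
  linarith

end Paper
end
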